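/- arXiv:1806.10539 — 5 statements merged into one kernel-verified Lean document; each statement's English description precedes it below -/
import Mathlib

section
/- Fix E₀ > 0 and let φ : ℝ → ℝ be continuous and nonnegative, with φ(x) = 0 for x < 0, and suppose there exists δ ∈ (0,1] with φ(x) > 0 for all x ∈ (0, δ). For κ ∈ {−1/2, 1/2} and V ∈ (0, E₀) define ξ_κ(V) = (4π/V) ∫_V^{E₀} φ(1 − E/E₀)(E²/V² − 1)^κ dE. Then for κ ∈ {−1/2, 1/2} the ratio ξ_{κ+1}(V)/ξ_κ(V) tends to 0 as V → E₀ from the left. -/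
open MeasureTheory Filter Topology

/-!
Raising the exponent `κ` by one multiplies the integrand of `ξ_κ(V)` by `E² / V² - 1`, which is at
most `E₀² / V² - 1` on `[V, E₀]`. Hence `0 < ξ_{κ+1}(V) / ξ_κ(V) ≤ E₀² / V² - 1`, and the upper
bound vanishes as `V → E₀`. The integrals converge because the weight `(E² / V² - 1) ^ κ` behaves
like a multiple of `(E - V) ^ κ` at its only singularity `E = V`, and `κ > -1`.
-/

/-- The moment integral `ξ_κ(V) = (4π / V) ∫_V^{E₀} φ(1 - E / E₀) (E² / V² - 1) ^ κ dE` of the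
isotropic ansatz function `φ` with cut-off energy `E₀`. It is meaningful for `0 < V < E₀` and
`-1 < κ`; elsewhere the integral may take a junk value. -/
noncomputable def momentIntegral (E₀ : ℝ) (φ : ℝ → ℝ) (κ V : ℝ) : ℝ :=
  (4 * Real.pi / V) * ∫ E in V..E₀, φ (1 - E / E₀) * (E ^ 2 / V ^ 2 - 1) ^ κ

section Weight

variable {V E κ : ℝ}

lemma sq_div_sq_sub_one_pos (hV : 0 < V) (hVE : V < E) : 0 < E ^ 2 / V ^ 2 - 1 := by
  rw [sub_pos, one_lt_div (by positivity)]
  gcongr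

lemma sq_div_sq_sub_one_rpow_eq (hV : 0 < V) (hVE : V ≤ E) :
    (E ^ 2 / V ^ 2 - 1) ^ κ = (E - V) ^ κ * ((E + V) / V ^ 2) ^ κ := by
  have hE : 0 < E := hV.trans_le hVE
  rw [← Real.mul_rpow (sub_nonneg.2 hVE) (by positivity)]
  congr 1
  field_simp
  ring

lemma intervalIntegrable_sq_div_sq_sub_one_rpow (hV : 0 < V) (hVE : V ≤ E) (hκ : -1 < κ) :
    IntervalIntegrable (fun x => (x ^ 2 / V ^ 2 - 1) ^ κ) volume V E := by
  have singular_part : IntervalIntegrable (fun x => (x - V) ^ κ) volume V E := by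
    simpa using
      (intervalIntegral.intervalIntegrable_rpow' (a := 0) (b := E - V) hκ).comp_sub_right V
  have regular_part : ContinuousOn (fun x => ((x + V) / V ^ 2) ^ κ) (Set.uIcc V E) := by
    refine ContinuousOn.rpow_const (by fun_prop) fun x hx => Or.inl ?_
    have hx_pos : 0 < x := hV.trans_le (Set.uIcc_of_le hVE ▸ hx).1
    positivity
  refine (singular_part.mul_continuousOn regular_part).congr fun x hx => ?_
  rw [Set.uIoc_of_le hVE] at hx
  exact (sq_div_sq_sub_one_rpow_eq hV hx.1.le).symm

lemma tendsto_sq_div_sq_sub_one {E₀ : ℝ} (hE₀ : E₀ ≠ 0) :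
    Tendsto (fun V => E₀ ^ 2 / V ^ 2 - 1) (𝓝 E₀) (𝓝 0) := by
  have hcont : ContinuousAt (fun V => E₀ ^ 2 / V ^ 2 - 1) E₀ := by
    fun_prop (disch := exact pow_ne_zero 2 hE₀)
  simpa [hE₀] using hcont.tendsto

end Weight

section Moment

variable {E₀ V κ : ℝ} {φ : ℝ → ℝ}

lemma one_sub_div_mem_Ioo {E : ℝ} (hV : 0 < V) (hE : E ∈ Set.Ioo V E₀) :
    1 - E / E₀ ∈ Set.Ioo 0 (1 - V / E₀) := by
  have hE₀ : 0 < E₀ := hV.trans (hE.1.trans hE.2)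
  exact ⟨sub_pos.2 ((div_lt_one hE₀).2 hE.2),
    sub_lt_sub_left (div_lt_div_of_pos_right hE.1 hE₀) 1⟩

lemma intervalIntegrable_moment_integrand (hV : 0 < V) (hVE : V ≤ E₀) (hκ : -1 < κ)
    (hφ : ContinuousOn φ (Set.Icc 0 (1 - V / E₀))) :
    IntervalIntegrable (fun E => φ (1 - E / E₀) * (E ^ 2 / V ^ 2 - 1) ^ κ) volume V E₀ := by
  refine (intervalIntegrable_sq_div_sq_sub_one_rpow hV hVE hκ).continuousOn_mul ?_
  rw [Set.uIcc_of_le hVE]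
  refine hφ.comp (by fun_prop) fun E hE => ?_
  have hE₀ : 0 < E₀ := hV.trans_le hVE
  exact ⟨sub_nonneg.2 ((div_le_one hE₀).2 hE.2),
    sub_le_sub_left (div_le_div_of_nonneg_right hE.1 hE₀.le) 1⟩

theorem momentIntegral_pos (hV : 0 < V) (hVE : V < E₀) (hκ : -1 < κ)
    (hφ : ContinuousOn φ (Set.Icc 0 (1 - V / E₀)))
    (hpos : ∀ x ∈ Set.Ioo 0 (1 - V / E₀), 0 < φ x) : 0 < momentIntegral E₀ φ κ V := by
  refine mul_pos (by positivity) (intervalIntegral.intervalIntegral_pos_of_pos_on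
    (intervalIntegrable_moment_integrand hV hVE.le hκ hφ) (fun E hE => ?_) hVE)
  exact mul_pos (hpos _ (one_sub_div_mem_Ioo hV hE))
    (Real.rpow_pos_of_pos (sq_div_sq_sub_one_pos hV hE.1) κ)

theorem momentIntegral_add_one_le (hV : 0 < V) (hVE : V ≤ E₀) (hκ : -1 < κ)
    (hφ : ContinuousOn φ (Set.Icc 0 (1 - V / E₀)))
    (hnonneg : ∀ x ∈ Set.Ioo 0 (1 - V / E₀), 0 ≤ φ x) :
    momentIntegral E₀ φ (κ + 1) V ≤ (E₀ ^ 2 / V ^ 2 - 1) * momentIntegral E₀ φ κ V := by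
  unfold momentIntegral
  rw [mul_left_comm]
  gcongr
  rw [← intervalIntegral.integral_const_mul]
  refine intervalIntegral.integral_mono_on_of_le_Ioo hVE
    (intervalIntegrable_moment_integrand hV hVE (by linarith) hφ)
    ((intervalIntegrable_moment_integrand hV hVE hκ hφ).const_mul _) fun E hE => ?_
  have hE_pos : 0 < E := hV.trans hE.1
  have weight_pos : 0 < E ^ 2 / V ^ 2 - 1 := sq_div_sq_sub_one_pos hV hE.1
  have integrand_nonneg : 0 ≤ φ (1 - E / E₀) * (E ^ 2 / V ^ 2 - 1) ^ κ :=
    mul_nonneg (hnonneg _ (one_sub_div_mem_Ioo hV hE)) (Real.rpow_nonneg weight_pos.le κ)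
  calc φ (1 - E / E₀) * (E ^ 2 / V ^ 2 - 1) ^ (κ + 1)
      = (E ^ 2 / V ^ 2 - 1) * (φ (1 - E / E₀) * (E ^ 2 / V ^ 2 - 1) ^ κ) := by
        rw [Real.rpow_add_one weight_pos.ne']
        ring
    _ ≤ (E₀ ^ 2 / V ^ 2 - 1) * (φ (1 - E / E₀) * (E ^ 2 / V ^ 2 - 1) ^ κ) := by
        gcongr
        exact hE.2.le

end Moment

theorem stmt_4_general {E₀ δ κ : ℝ} {φ : ℝ → ℝ} (hE₀ : 0 < E₀) (hδ : 0 < δ) (hκ : -1 < κ)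
    (hφ : ContinuousOn φ (Set.Ico 0 δ)) (hpos : ∀ x ∈ Set.Ioo 0 δ, 0 < φ x) :
    Tendsto (fun V => momentIntegral E₀ φ (κ + 1) V / momentIntegral E₀ φ κ V)
      (𝓝[<] E₀) (𝓝 0) := by
  have ratio_mem : ∀ᶠ V in 𝓝[<] E₀,
      momentIntegral E₀ φ (κ + 1) V / momentIntegral E₀ φ κ V ∈
        Set.Icc 0 (E₀ ^ 2 / V ^ 2 - 1) := by
    have hδE₀ : (1 - δ) * E₀ < E₀ := mul_lt_of_lt_one_left hE₀ (by linarith)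
    filter_upwards [Ioo_mem_nhdsLT hE₀, Ioo_mem_nhdsLT hδE₀] with V ⟨hV, hVE⟩ ⟨hδV, _⟩
    have hVδ : 1 - V / E₀ < δ := sub_lt_comm.1 ((lt_div_iff₀ hE₀).2 hδV)
    have hφV : ContinuousOn φ (Set.Icc 0 (1 - V / E₀)) := hφ.mono (Set.Icc_subset_Ico_right hVδ)
    have hposV : ∀ x ∈ Set.Ioo 0 (1 - V / E₀), 0 < φ x :=
      fun x hx => hpos x (Set.Ioo_subset_Ioo_right hVδ.le hx)
    have moment_pos := momentIntegral_pos hV hVE hκ hφV hposV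
    have moment_succ_pos := momentIntegral_pos hV hVE (by linarith : -1 < κ + 1) hφV hposV
    exact ⟨(div_pos moment_succ_pos moment_pos).le, (div_le_iff₀ moment_pos).2
      (momentIntegral_add_one_le hV hVE.le hκ hφV fun x hx => (hposV x hx).le)⟩
  exact squeeze_zero' (ratio_mem.mono fun _ h => h.1) (ratio_mem.mono fun _ h => h.2)
    ((tendsto_sq_div_sq_sub_one hE₀.ne').mono_left nhdsWithin_le_nhds)

/-- First claim of Lemma 4.3: `ξ_{κ+1}(V)/ξ_κ(V) → 0` as `V → E₀⁻`,
for `κ ∈ {-1/2, 1/2}`. -/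
theorem stmt_4 (E₀ : ℝ) (hE₀ : 0 < E₀) (φ : ℝ → ℝ)
    (hcont : Continuous φ) (hnn : ∀ x, 0 ≤ φ x) (hzero : ∀ x < (0 : ℝ), φ x = 0)
    (δ : ℝ) (hδ : δ ∈ Set.Ioc (0 : ℝ) 1) (hpos : ∀ x ∈ Set.Ioo (0 : ℝ) δ, 0 < φ x)
    (ξ : ℝ → ℝ → ℝ)
    (hξ : ∀ κ V, ξ κ V =
      (4 * Real.pi / V) * ∫ E in V..E₀, φ (1 - E / E₀) * (E ^ 2 / V ^ 2 - 1) ^ κ) :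
    ∀ κ ∈ ({-1/2, 1/2} : Set ℝ),
      Tendsto (fun V => ξ (κ + 1) V / ξ κ V) (nhdsWithin E₀ (Set.Iio E₀)) (nhds 0) := by
  intro κ hκ
  obtain rfl : ξ = momentIntegral E₀ φ := funext₂ hξ
  have hκ_gt : -1 < κ := by rcases hκ with rfl | rfl <;> norm_num
  exact stmt_4_general hE₀ hδ.1 hκ_gt hcont.continuousOn hpos
end

section
/- Fix E₀ > 0 and let φ : ℝ → ℝ be continuous, bounded, and nonnegative with φ(x) = 0 for x < 0. For κ ∈ {3/2, 1/2} define ξ_κ(V) = (4π/V) ∫_V^{E₀} φ(1 − E/E₀)(E²/V² − 1)^κ dE for V ∈ (0, E₀). Then ξ_{3/2} is differentiable on (0, E₀) and ξ_{3/2}′(V) = −(1/V)(4 ξ_{3/2}(V) + 3 ξ_{1/2}(V)). -/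
open MeasureTheory

/-!
Replacing `E² / V² - 1` by its positive part changes nothing for `E ≥ V` and makes the kernel
vanish for `0 ≤ E ≤ V`, so the moving endpoint `V` of the integral can be replaced by a fixed
`a < V`. For `κ > 1` the truncated kernel `((E² / V² - 1)⁺) ^ κ` is still `C¹` in `V`, and one
differentiates under the integral sign over `[a, b]`. Writing `E² / V² = (E² / V² - 1) + 1` in the
resulting integrand produces the moments of order `κ` and `κ - 1`.
-/

theorem hasDerivAt_posPart_rpow_const {p : ℝ} (hp : 1 < p) (y : ℝ) :
    HasDerivAt (fun y : ℝ ↦ y⁺ ^ p) (p * y⁺ ^ (p - 1)) y := by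
  rcases lt_trichotomy y 0 with hy | rfl | hy
  · have hzero : (fun y : ℝ ↦ y⁺ ^ p) =ᶠ[nhds y] fun _ ↦ 0 := by
      filter_upwards [Iio_mem_nhds hy] with z hz
      rw [posPart_of_nonpos hz.le, Real.zero_rpow (by linarith)]
    rw [posPart_of_nonpos hy.le, Real.zero_rpow (by linarith), mul_zero]
    exact (hasDerivAt_const y 0).congr_of_eventuallyEq hzero
  · have hleft : HasDerivWithinAt (fun y : ℝ ↦ y⁺ ^ p) 0 (Set.Iic 0) 0 := by
      refine (hasDerivWithinAt_const (0 : ℝ) (Set.Iic 0) (0 : ℝ)).congr (fun z hz ↦ ?_) ?_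
      · rw [posPart_of_nonpos hz, Real.zero_rpow (by linarith)]
      · rw [posPart_zero, Real.zero_rpow (by linarith)]
    have hright : HasDerivWithinAt (fun y : ℝ ↦ y⁺ ^ p) 0 (Set.Ici 0) 0 := by
      have hpow := Real.hasDerivAt_rpow_const (x := 0) (Or.inr hp.le)
      rw [Real.zero_rpow (by linarith), mul_zero] at hpow
      exact hpow.hasDerivWithinAt.congr (fun z hz ↦ by rw [posPart_of_nonneg hz])
        (by rw [posPart_zero])
    have hunion := hleft.union hright
    rw [Set.Iic_union_Ici, hasDerivWithinAt_univ] at hunion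
    rwa [posPart_zero, Real.zero_rpow (by linarith), mul_zero]
  · have hpow : (fun y : ℝ ↦ y⁺ ^ p) =ᶠ[nhds y] fun y ↦ y ^ p := by
      filter_upwards [Ioi_mem_nhds hy] with z hz
      rw [posPart_of_nonneg hz.le]
    rw [posPart_of_nonneg hy.le]
    exact (Real.hasDerivAt_rpow_const (Or.inl hy.ne')).congr_of_eventuallyEq hpow

theorem add_one_mul_posPart_rpow_sub_one {p : ℝ} (hp : 1 < p) (y : ℝ) :
    (y + 1) * y⁺ ^ (p - 1) = y⁺ ^ p + y⁺ ^ (p - 1) := by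
  rcases le_or_gt y 0 with hy | hy
  · rw [posPart_of_nonpos hy, Real.zero_rpow (by linarith), Real.zero_rpow (by linarith)]
    ring
  · rw [posPart_of_nonneg hy.le, Real.rpow_sub_one hy.ne']
    field_simp

/-- The kernel `(E² / V² - 1) ^ κ` of the moment integrals, extended to `|E| ≤ |V|` by means of
the positive part, hence by zero unless `κ = 0`; this lets the lower limit of integration be
independent of `V`. -/
noncomputable def momentKernel (κ V E : ℝ) : ℝ := (E ^ 2 / V ^ 2 - 1)⁺ ^ κ

theorem momentKernel_nonneg (κ V E : ℝ) : 0 ≤ momentKernel κ V E :=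
  Real.rpow_nonneg (posPart_nonneg _) κ

theorem momentKernel_of_le {κ V E : ℝ} (hκ : κ ≠ 0) (hE : 0 ≤ E) (hEV : E ≤ V) :
    momentKernel κ V E = 0 := by
  have hratio : E ^ 2 / V ^ 2 ≤ 1 := div_le_one_of_le₀ (by gcongr) (by positivity)
  rw [momentKernel, posPart_of_nonpos (by linarith), Real.zero_rpow hκ]

theorem momentKernel_of_ge {V E : ℝ} (κ : ℝ) (hV : 0 < V) (hVE : V ≤ E) :
    momentKernel κ V E = (E ^ 2 / V ^ 2 - 1) ^ κ := by
  have hratio : 1 ≤ E ^ 2 / V ^ 2 := (one_le_div (by positivity)).2 (by gcongr)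
  rw [momentKernel, posPart_of_nonneg (by linarith)]

theorem momentKernel_le_momentKernel {κ a b V E : ℝ} (hκ : 0 ≤ κ) (ha : 0 < a) (haV : a ≤ V)
    (hE : 0 ≤ E) (hEb : E ≤ b) : momentKernel κ V E ≤ momentKernel κ a b := by
  have hratio : E ^ 2 / V ^ 2 - 1 ≤ b ^ 2 / a ^ 2 - 1 := by gcongr
  exact Real.rpow_le_rpow (posPart_nonneg _) (posPart_mono hratio) hκ

theorem continuous_momentKernel {κ : ℝ} (hκ : 0 ≤ κ) (V : ℝ) : Continuous (momentKernel κ V) := by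
  have hpos : Continuous fun E : ℝ ↦ (E ^ 2 / V ^ 2 - 1)⁺ := by
    simp only [posPart_def]
    fun_prop
  exact hpos.rpow_const fun _ ↦ Or.inr hκ

theorem hasDerivAt_momentKernel {κ V : ℝ} (hκ : 1 < κ) (hV : V ≠ 0) (E : ℝ) :
    HasDerivAt (fun V ↦ momentKernel κ V E)
      (-(2 * κ / V) * (momentKernel κ V E + momentKernel (κ - 1) V E)) V := by
  have hbase : HasDerivAt (fun V : ℝ ↦ E ^ 2 / V ^ 2 - 1) (-(2 / V) * (E ^ 2 / V ^ 2)) V := by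
    refine (((hasDerivAt_const V (E ^ 2)).div (hasDerivAt_pow 2 V)
      (pow_ne_zero 2 hV)).sub_const 1).congr_deriv ?_
    field_simp
    ring
  refine ((hasDerivAt_posPart_rpow_const hκ _).comp V hbase).congr_deriv ?_
  rw [momentKernel, momentKernel, ← add_one_mul_posPart_rpow_sub_one hκ]
  ring

section MomentIntegral

variable {g : ℝ → ℝ} {κ a b V : ℝ}

theorem integral_mul_momentKernel (g : ℝ → ℝ) (hκ : κ ≠ 0) (ha : 0 < a) (haV : a ≤ V)
    (hVb : V ≤ b) :
    ∫ E in a..b, g E * momentKernel κ V E = ∫ E in V..b, g E * (E ^ 2 / V ^ 2 - 1) ^ κ := by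
  calc ∫ E in a..b, g E * momentKernel κ V E
      = ∫ E in V..b, g E * momentKernel κ V E := by
        rw [intervalIntegral.integral_of_le (haV.trans hVb), intervalIntegral.integral_of_le hVb]
        refine setIntegral_eq_of_subset_of_forall_sdiff_eq_zero measurableSet_Ioc
          (Set.Ioc_subset_Ioc_left haV) fun E hE ↦ ?_
        have hEV : E ≤ V := not_lt.1 fun hVE ↦ hE.2 ⟨hVE, hE.1.2⟩
        rw [momentKernel_of_le hκ (ha.trans hE.1.1).le hEV, mul_zero]
    _ = ∫ E in V..b, g E * (E ^ 2 / V ^ 2 - 1) ^ κ := by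
        refine intervalIntegral.integral_congr fun E hE ↦ ?_
        rw [Set.uIcc_of_le hVb] at hE
        simp only [momentKernel_of_ge κ (ha.trans_le haV) hE.1]

theorem intervalIntegrable_mul_momentKernel (hg : IntervalIntegrable g volume a b) (hκ : 0 ≤ κ)
    (V : ℝ) : IntervalIntegrable (fun E ↦ g E * momentKernel κ V E) volume a b :=
  hg.mul_continuousOn (continuous_momentKernel hκ V).continuousOn

theorem norm_deriv_momentKernel_le {E : ℝ} (hκ : 1 ≤ κ) (ha : 0 < a) (haV : a ≤ V) (hE : 0 ≤ E)
    (hEb : E ≤ b) :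
    ‖-(2 * κ / V) * (momentKernel κ V E + momentKernel (κ - 1) V E)‖ ≤
      2 * κ / a * (momentKernel κ a b + momentKernel (κ - 1) a b) := by
  have hV : 0 < V := ha.trans_le haV
  have hkernel := momentKernel_le_momentKernel (κ := κ) (by linarith) ha haV hE hEb
  have hkernel' := momentKernel_le_momentKernel (sub_nonneg.2 hκ) ha haV hE hEb
  have hsum : 0 ≤ momentKernel κ V E + momentKernel (κ - 1) V E :=
    add_nonneg (momentKernel_nonneg _ _ _) (momentKernel_nonneg _ _ _)
  rw [norm_mul, norm_neg, Real.norm_of_nonneg (by positivity), Real.norm_of_nonneg hsum]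
  gcongr

theorem hasDerivAt_integral_mul_momentKernel (hκ : 1 < κ) (ha : 0 < a) (haV : a < V) (hab : a ≤ b)
    (hg : IntervalIntegrable g volume a b) :
    HasDerivAt (fun V ↦ ∫ E in a..b, g E * momentKernel κ V E)
      (-(2 * κ / V) * ((∫ E in a..b, g E * momentKernel κ V E) +
        ∫ E in a..b, g E * momentKernel (κ - 1) V E)) V := by
  have hint := intervalIntegrable_mul_momentKernel hg (κ := κ) (by linarith)
  have hint' := intervalIntegrable_mul_momentKernel hg (κ := κ - 1) (by linarith)
  have hderiv_eq (E : ℝ) :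
      g E * (-(2 * κ / V) * (momentKernel κ V E + momentKernel (κ - 1) V E)) =
        -(2 * κ / V) * (g E * momentKernel κ V E + g E * momentKernel (κ - 1) V E) := by
    ring
  have hderiv_int : IntervalIntegrable
      (fun E ↦ g E * (-(2 * κ / V) * (momentKernel κ V E + momentKernel (κ - 1) V E)))
      volume a b := by
    simpa only [hderiv_eq] using ((hint V).add (hint' V)).const_mul (-(2 * κ / V))
  have hleibniz := (intervalIntegral.hasDerivAt_integral_of_dominated_loc_of_deriv_le
    (F := fun V E ↦ g E * momentKernel κ V E)
    (F' := fun V E ↦ g E * (-(2 * κ / V) * (momentKernel κ V E + momentKernel (κ - 1) V E)))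
    (bound := fun E ↦ ‖g E‖ * (2 * κ / a * (momentKernel κ a b + momentKernel (κ - 1) a b)))
    (Ioi_mem_nhds haV) (.of_forall fun V ↦ (hint V).def'.aestronglyMeasurable) (hint V)
    hderiv_int.def'.aestronglyMeasurable
    (.of_forall fun E hE V hV ↦ by
      rw [Set.uIoc_of_le hab] at hE
      rw [norm_mul]
      gcongr
      exact norm_deriv_momentKernel_le hκ.le ha (le_of_lt hV) (ha.trans hE.1).le hE.2)
    (hg.norm.mul_const _)
    (.of_forall fun E _ V hV ↦
      (hasDerivAt_momentKernel hκ (ha.trans hV).ne' E).const_mul (g E))).2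
  simpa only [hderiv_eq, intervalIntegral.integral_const_mul,
    intervalIntegral.integral_add (hint V) (hint' V)] using hleibniz

theorem hasDerivAt_momentIntegral (hκ : 1 < κ) (ha : 0 < a) (haV : a < V) (hVb : V < b)
    (hg : IntervalIntegrable g volume a b) :
    HasDerivAt (fun V ↦ ∫ E in V..b, g E * (E ^ 2 / V ^ 2 - 1) ^ κ)
      (-(2 * κ / V) * ((∫ E in V..b, g E * (E ^ 2 / V ^ 2 - 1) ^ κ) +
        ∫ E in V..b, g E * (E ^ 2 / V ^ 2 - 1) ^ (κ - 1))) V := by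
  have hκ₀ : κ ≠ 0 := by linarith
  have hfixed : (fun V ↦ ∫ E in V..b, g E * (E ^ 2 / V ^ 2 - 1) ^ κ) =ᶠ[nhds V]
      fun V ↦ ∫ E in a..b, g E * momentKernel κ V E := by
    filter_upwards [Ioo_mem_nhds haV hVb] with W hW
    exact (integral_mul_momentKernel g hκ₀ ha hW.1.le hW.2.le).symm
  rw [← integral_mul_momentKernel g hκ₀ ha haV.le hVb.le,
    ← integral_mul_momentKernel g (sub_ne_zero.2 hκ.ne') ha haV.le hVb.le]
  exact (hasDerivAt_integral_mul_momentKernel hκ ha haV (haV.trans hVb).le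
    hg).congr_of_eventuallyEq hfixed

end MomentIntegral

theorem intervalIntegrable_comp_one_sub_div {φ : ℝ → ℝ} (hφ : IntervalIntegrable φ volume 0 1)
    (c : ℝ) : IntervalIntegrable (fun E ↦ φ (1 - E / c)) volume 0 c := by
  have hscaled := ((hφ.comp_sub_left 1).comp_mul_right (c := c⁻¹)).symm
  simpa [div_eq_mul_inv] using hscaled

theorem stmt_6_general (E₀ : ℝ) (φ : ℝ → ℝ) (hφ : IntervalIntegrable φ volume 0 1)
    (ξ : ℝ → ℝ → ℝ)
    (hξ : ∀ κ V, ξ κ V =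
      (4 * Real.pi / V) * ∫ E in V..E₀, φ (1 - E / E₀) * (E ^ 2 / V ^ 2 - 1) ^ κ)
    (κ : ℝ) (hκ : 1 < κ) :
    ∀ V ∈ Set.Ioo (0 : ℝ) E₀,
      HasDerivAt (ξ κ) (-(1 / V) * ((2 * κ + 1) * ξ κ V + 2 * κ * ξ (κ - 1) V)) V := by
  rintro V ⟨hV, hVE₀⟩
  have hweight : IntervalIntegrable (fun E ↦ φ (1 - E / E₀)) volume (V / 2) E₀ := by
    refine (intervalIntegrable_comp_one_sub_div hφ E₀).mono_set
      (Set.uIcc_subset_uIcc_right ?_)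
    rw [Set.uIcc_of_le (hV.trans hVE₀).le]
    constructor <;> linarith
  have hprefactor : HasDerivAt (fun V : ℝ ↦ 4 * Real.pi / V) (-(4 * Real.pi) / V ^ 2) V := by
    simpa using (hasDerivAt_const V (4 * Real.pi)).fun_div (hasDerivAt_id V) hV.ne'
  have hintegral := hasDerivAt_momentIntegral hκ (half_pos hV) (half_lt_self hV) hVE₀ hweight
  rw [funext (hξ κ), hξ (κ - 1)]
  refine (hprefactor.mul hintegral).congr_deriv ?_
  field_simp
  ring

/-- First derivative formula of Lemma 4.6:
`ξ_{3/2}'(V) = -(1/V)(4 ξ_{3/2}(V) + 3 ξ_{1/2}(V))` on `(0, E₀)`. -/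
theorem stmt_6 (E₀ : ℝ) (hE₀ : 0 < E₀) (φ : ℝ → ℝ)
    (hcont : Continuous φ) (hbd : ∃ M, ∀ x, |φ x| ≤ M)
    (hnn : ∀ x, 0 ≤ φ x) (hzero : ∀ x < (0 : ℝ), φ x = 0)
    (ξ : ℝ → ℝ → ℝ)
    (hξ : ∀ κ V, ξ κ V =
      (4 * Real.pi / V) * ∫ E in V..E₀, φ (1 - E / E₀) * (E ^ 2 / V ^ 2 - 1) ^ κ) :
    ∀ V ∈ Set.Ioo (0 : ℝ) E₀,
      HasDerivAt (ξ (3/2)) (-(1 / V) * (4 * ξ (3/2) V + 3 * ξ (1/2) V)) V := by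
  convert stmt_6_general E₀ φ (hcont.intervalIntegrable 0 1) ξ hξ (3 / 2) (by norm_num)
    using 7 <;> norm_num
end

section
/- Fix E₀ > 0 and let φ : ℝ → ℝ be continuous, bounded, and nonnegative with φ(x) = 0 for x < 0. For κ ∈ {1/2, −1/2} define ξ_κ(V) = (4π/V) ∫_V^{E₀} φ(1 − E/E₀)(E²/V² − 1)^κ dE for V ∈ (0, E₀). Then ξ_{1/2} is differentiable on (0, E₀) and ξ_{1/2}′(V) = −(1/V)(2 ξ_{1/2}(V) + ξ_{−1/2}(V)). -/
open MeasureTheory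

/-!
Write `x₊^κ` for the truncated power. For `0 < V < E₀`,
`ξ_κ(V) = 4π V^(-2κ-1) ∫_0^E₀ φ(1 - E/E₀) (E² - V²)₊^κ dE`, an integral over a fixed interval, which
for `κ > 0` may be differentiated under the integral sign. The domination comes from
`|x₊^κ - y₊^κ| ≤ |y|^(κ-1) |x - y|` for `0 ≤ κ ≤ 1` (for `κ ≥ 1` the truncated power is locally
Lipschitz): it bounds the difference quotient at `V` by a constant times `|E² - V²|^(κ-1)`, whose
singularity at `E = V` is integrable. The product rule then gives
`ξ_κ' = -(1/V) ((2κ+1) ξ_κ + 2κ ξ_{κ-1})`.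
-/

section DominatedDifferentiation

variable {α 𝕜 E : Type*} [MeasurableSpace α] {μ : Measure α} [RCLike 𝕜]
  [NormedAddCommGroup E] [NormedSpace ℝ E] [NormedSpace 𝕜 E]

/- Unlike in `hasDerivAt_integral_of_dominated_loc_of_lip`, the Lipschitz bound is required only
against the base point `x₀`, so `bound` may be singular at points `a` that depend on `x₀`. -/
lemma hasDerivAt_integral_of_dominated_sub_base {F : 𝕜 → α → E} {F' : α → E} {x₀ : 𝕜} {s : Set 𝕜}
    {bound : α → ℝ} (hs : s ∈ nhds x₀) (hF_meas : ∀ x ∈ s, AEStronglyMeasurable (F x) μ)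
    (hF_int : Integrable (F x₀) μ) (hF'_meas : AEStronglyMeasurable F' μ)
    (h_bound : ∀ᵐ a ∂μ, ∀ x ∈ s, ‖F x a - F x₀ a‖ ≤ bound a * ‖x - x₀‖)
    (bound_integrable : Integrable bound μ)
    (h_diff : ∀ᵐ a ∂μ, HasDerivAt (F · a) (F' a) x₀) :
    HasDerivAt (fun x ↦ ∫ a, F x a ∂μ) (∫ a, F' a ∂μ) x₀ := by
  obtain ⟨hF'_int, h_fderiv⟩ := hasFDerivAt_integral_of_dominated_loc_of_lip' hs hF_meas hF_int
    ((ContinuousLinearMap.toSpanSingletonCLE (𝕜 := 𝕜) (E := E)).continuous.comp_aestronglyMeasurable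
      hF'_meas) h_bound bound_integrable (h_diff.mono fun a ha ↦ ha.hasFDerivAt)
  simpa [ContinuousLinearMap.integral_apply hF'_int] using h_fderiv.hasDerivAt

end DominatedDifferentiation

section RpowEstimates

variable {κ x y R : ℝ}

lemma abs_rpow_sub_one_le_abs_sub_one (hκ₀ : 0 ≤ κ) (hκ₁ : κ ≤ 1) (hx : 0 ≤ x) :
    |x ^ κ - 1| ≤ |x - 1| := by
  rcases le_total x 1 with hx₁ | hx₁
  · rw [abs_of_nonpos (by linarith [Real.rpow_le_one hx hx₁ hκ₀]), abs_of_nonpos (by linarith)]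
    linarith [Real.self_le_rpow_of_le_one hx hx₁ hκ₁]
  · rw [abs_of_nonneg (by linarith [Real.one_le_rpow hx₁ hκ₀]), abs_of_nonneg (by linarith)]
    linarith [Real.rpow_le_self_of_one_le hx₁ hκ₁]

lemma abs_rpow_sub_rpow_le_of_le_one (hκ₀ : 0 ≤ κ) (hκ₁ : κ ≤ 1) (hx : 0 ≤ x) (hy : 0 < y) :
    |x ^ κ - y ^ κ| ≤ y ^ (κ - 1) * |x - y| := by
  have hyκ : 0 < y ^ κ := Real.rpow_pos_of_pos hy κ
  calc |x ^ κ - y ^ κ| = y ^ κ * |(x / y) ^ κ - 1| := by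
        rw [Real.div_rpow hx hy.le, div_sub_one hyκ.ne', abs_div, abs_of_pos hyκ,
          mul_div_cancel₀ _ hyκ.ne']
    _ ≤ y ^ κ * |x / y - 1| :=
        mul_le_mul_of_nonneg_left
          (abs_rpow_sub_one_le_abs_sub_one hκ₀ hκ₁ (div_nonneg hx hy.le)) hyκ.le
    _ = y ^ (κ - 1) * |x - y| := by
        rw [div_sub_one hy.ne', abs_div, abs_of_pos hy, Real.rpow_sub_one hy.ne']
        ring

lemma abs_rpow_sub_rpow_le_of_one_le (hκ : 1 ≤ κ) (hx : x ∈ Set.Icc 0 R) (hy : y ∈ Set.Icc 0 R) :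
    |x ^ κ - y ^ κ| ≤ κ * R ^ (κ - 1) * |x - y| := by
  refine (convex_Icc 0 R).norm_image_sub_le_of_norm_hasDerivWithin_le
    (fun z _ ↦ (Real.hasDerivAt_rpow_const (Or.inr hκ)).hasDerivWithinAt) (fun z hz ↦ ?_) hy hx
  rw [Real.norm_of_nonneg (mul_nonneg (by linarith) (Real.rpow_nonneg hz.1 _))]
  gcongr
  exacts [hz.1, hz.2]

lemma intervalIntegrable_abs_rpow {r : ℝ} (hr : -1 < r) (a b : ℝ) :
    IntervalIntegrable (fun t : ℝ ↦ |t| ^ r) volume a b := by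
  refine intervalIntegrable_of_even (fun t ↦ by rw [abs_neg]) fun t ht ↦ ?_
  refine (intervalIntegral.intervalIntegrable_rpow' hr).congr fun u hu ↦ ?_
  rw [Set.uIoc_of_le ht.le] at hu
  rw [abs_of_pos hu.1]

lemma integrableOn_abs_sq_sub_sq_rpow {r a V : ℝ} (hr : -1 < r) (hV : 0 < V) :
    IntegrableOn (fun E : ℝ ↦ |E ^ 2 - V ^ 2| ^ r) (Set.Ioc 0 a) := by
  rcases le_total a 0 with ha | ha
  · simp [Set.Ioc_eq_empty_of_le ha]
  have h_singular : IntervalIntegrable (fun E : ℝ ↦ |E - V| ^ r) volume 0 a := by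
    simpa using (intervalIntegrable_abs_rpow hr (0 - V) (a - V)).comp_sub_right V
  have h_regular : ContinuousOn (fun E : ℝ ↦ (E + V) ^ r) (Set.uIcc 0 a) := by
    rw [Set.uIcc_of_le ha]
    exact ContinuousOn.rpow_const (by fun_prop) fun E hE ↦ Or.inl (by linarith [hE.1])
  refine (h_singular.mul_continuousOn h_regular).1.congr_fun (fun E hE ↦ ?_) measurableSet_Ioc
  have hEV : 0 < E + V := by linarith [hE.1]
  dsimp only
  rw [sq_sub_sq, abs_mul, abs_of_pos hEV, Real.mul_rpow hEV.le (abs_nonneg _), mul_comm]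

end RpowEstimates

/-- The truncated power `x₊^κ`, equal to `x^κ` for `x > 0` and to `0` for `x ≤ 0`, for every real
exponent: in contrast to `max x 0 ^ κ`, it vanishes for `x ≤ 0` also when `κ = 0`, so that
`κ x₊^(κ-1)` is the derivative of `x₊^κ` away from `0` without exception. -/
noncomputable def truncPow (κ x : ℝ) : ℝ := (Set.Ioi 0).indicator (· ^ κ) x

section TruncPow

variable {κ x y R : ℝ}

lemma truncPow_of_pos (hx : 0 < x) : truncPow κ x = x ^ κ :=
  Set.indicator_of_mem (Set.mem_Ioi.2 hx) _

lemma truncPow_of_nonpos (hx : x ≤ 0) : truncPow κ x = 0 :=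
  Set.indicator_of_notMem (Set.notMem_Ioi.2 hx) _

lemma truncPow_eq_max_rpow (hκ : κ ≠ 0) : truncPow κ x = max x 0 ^ κ := by
  rcases le_or_gt x 0 with hx | hx
  · rw [truncPow_of_nonpos hx, max_eq_right hx, Real.zero_rpow hκ]
  · rw [truncPow_of_pos hx, max_eq_left hx.le]

lemma measurable_truncPow (κ : ℝ) : Measurable (truncPow κ) :=
  (measurable_id.pow_const κ).indicator measurableSet_Ioi

lemma continuous_truncPow (hκ : 0 < κ) : Continuous (truncPow κ) := by
  simp_rw [funext fun x ↦ truncPow_eq_max_rpow (x := x) hκ.ne']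
  exact (continuous_id.max continuous_const).rpow_const fun _ ↦ Or.inr hκ.le

lemma hasDerivAt_truncPow (κ : ℝ) (hx : x ≠ 0) :
    HasDerivAt (truncPow κ) (κ * truncPow (κ - 1) x) x := by
  rcases lt_or_gt_of_ne hx with hx | hx
  · rw [truncPow_of_nonpos hx.le, mul_zero]
    refine (hasDerivAt_const x (0 : ℝ)).congr_of_eventuallyEq ?_
    filter_upwards [gt_mem_nhds hx] with t ht using truncPow_of_nonpos ht.le
  · rw [truncPow_of_pos hx]
    refine (Real.hasDerivAt_rpow_const (Or.inl hx.ne')).congr_of_eventuallyEq ?_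
    filter_upwards [lt_mem_nhds hx] with t ht using truncPow_of_pos ht

lemma abs_truncPow_sub_truncPow_le_of_le_one (hκ₀ : 0 ≤ κ) (hκ₁ : κ ≤ 1) (hy : y ≠ 0) :
    |truncPow κ x - truncPow κ y| ≤ |y| ^ (κ - 1) * |x - y| := by
  rcases lt_or_gt_of_ne hy with hy | hy <;> rcases le_or_gt x 0 with hx | hx
  · rw [truncPow_of_nonpos hx, truncPow_of_nonpos hy.le, sub_zero, abs_zero]
    positivity
  · have hxy : 0 < x - y := by linarith
    rw [truncPow_of_pos hx, truncPow_of_nonpos hy.le, sub_zero, abs_of_nonneg (by positivity),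
      abs_of_neg hy, abs_of_pos hxy]
    have h_rpow_le : (x - y) ^ (κ - 1) ≤ (-y) ^ (κ - 1) :=
      Real.rpow_le_rpow_of_nonpos (by linarith) (by linarith) (by linarith)
    calc x ^ κ ≤ (x - y) ^ κ := by gcongr; linarith
      _ = (x - y) ^ (κ - 1) * (x - y) := by
          rw [Real.rpow_sub_one hxy.ne', div_mul_cancel₀ _ hxy.ne']
      _ ≤ (-y) ^ (κ - 1) * (x - y) := by gcongr
  · rw [truncPow_of_nonpos hx, truncPow_of_pos hy, zero_sub, abs_neg,
      abs_of_pos (Real.rpow_pos_of_pos hy κ), abs_of_pos hy, abs_sub_comm,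
      abs_of_pos (by linarith : 0 < y - x)]
    calc y ^ κ = y ^ (κ - 1) * y := by rw [Real.rpow_sub_one hy.ne', div_mul_cancel₀ _ hy.ne']
      _ ≤ y ^ (κ - 1) * (y - x) := by gcongr; linarith
  · rw [truncPow_of_pos hx, truncPow_of_pos hy, abs_of_pos hy]
    exact abs_rpow_sub_rpow_le_of_le_one hκ₀ hκ₁ hx.le hy

lemma abs_truncPow_sub_truncPow_le_of_one_le (hκ : 1 ≤ κ) (hR : 0 ≤ R) (hx : x ≤ R) (hy : y ≤ R) :
    |truncPow κ x - truncPow κ y| ≤ κ * R ^ (κ - 1) * |x - y| := by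
  rw [truncPow_eq_max_rpow (by linarith), truncPow_eq_max_rpow (by linarith)]
  calc |max x 0 ^ κ - max y 0 ^ κ| ≤ κ * R ^ (κ - 1) * |max x 0 - max y 0| :=
        abs_rpow_sub_rpow_le_of_one_le hκ ⟨le_max_right _ _, max_le hx hR⟩
          ⟨le_max_right _ _, max_le hy hR⟩
    _ ≤ κ * R ^ (κ - 1) * |x - y| :=
        mul_le_mul_of_nonneg_left (abs_max_sub_max_le_abs x y 0) (by positivity)

lemma abs_truncPow_sub_truncPow_le (hκ : 0 < κ) (hR : 0 ≤ R) (hx : x ≤ R) (hy : y ≤ R)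
    (hy₀ : y ≠ 0) :
    |truncPow κ x - truncPow κ y| ≤ (|y| ^ (κ - 1) + κ * R ^ (κ - 1)) * |x - y| := by
  rw [add_mul]
  rcases le_total κ 1 with hκ₁ | hκ₁
  · exact (abs_truncPow_sub_truncPow_le_of_le_one hκ.le hκ₁ hy₀).trans
      (le_add_of_nonneg_right (by positivity))
  · exact (abs_truncPow_sub_truncPow_le_of_one_le hκ₁ hR hx hy).trans
      (le_add_of_nonneg_left (by positivity))

end TruncPow

/-- The truncated moment `∫_0^a f(E) (E² - V²)₊^κ dE`. Up to a power of `V` it is the moment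
integral `ξ_κ(V)`, but its domain of integration does not depend on `V`. -/
noncomputable def truncMoment (f : ℝ → ℝ) (a κ V : ℝ) : ℝ :=
  ∫ E in Set.Ioc 0 a, f E * truncPow κ (E ^ 2 - V ^ 2)

section TruncMoment

variable {f : ℝ → ℝ} {a κ M V : ℝ}

lemma hasDerivAt_truncPow_sq_sub_sq {E : ℝ} (κ : ℝ) (h : E ^ 2 - V ^ 2 ≠ 0) :
    HasDerivAt (fun v ↦ truncPow κ (E ^ 2 - v ^ 2))
      (-(2 * κ * V) * truncPow (κ - 1) (E ^ 2 - V ^ 2)) V := by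
  have h_inner : HasDerivAt (fun v : ℝ ↦ E ^ 2 - v ^ 2) (-(2 * V)) V := by
    simpa using (hasDerivAt_pow 2 V).const_sub (E ^ 2)
  exact ((hasDerivAt_truncPow κ h).comp V h_inner).congr_deriv (by ring)

lemma abs_truncPow_sq_sub_sq_sub_le {E v : ℝ} (hκ : 0 < κ) (hE : E ∈ Set.Ioc 0 a)
    (hEV : E ^ 2 - V ^ 2 ≠ 0) (hv : v ∈ Set.Ioo 0 (2 * V)) :
    |truncPow κ (E ^ 2 - v ^ 2) - truncPow κ (E ^ 2 - V ^ 2)| ≤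
      (|E ^ 2 - V ^ 2| ^ (κ - 1) + κ * (a ^ 2) ^ (κ - 1)) * (3 * V) * |v - V| := by
  have hE_sq : E ^ 2 ≤ a ^ 2 := pow_le_pow_left₀ hE.1.le hE.2 2
  have h_sq_sub : |(E ^ 2 - v ^ 2) - (E ^ 2 - V ^ 2)| ≤ 3 * V * |v - V| := by
    rw [sub_sub_sub_cancel_left, sq_sub_sq, abs_mul, abs_sub_comm V v,
      abs_of_pos (by linarith [hv.1, hv.2] : 0 < V + v)]
    gcongr
    linarith [hv.2]
  calc |truncPow κ (E ^ 2 - v ^ 2) - truncPow κ (E ^ 2 - V ^ 2)|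
      ≤ (|E ^ 2 - V ^ 2| ^ (κ - 1) + κ * (a ^ 2) ^ (κ - 1)) *
          |(E ^ 2 - v ^ 2) - (E ^ 2 - V ^ 2)| :=
        abs_truncPow_sub_truncPow_le hκ (sq_nonneg a) (by linarith [sq_nonneg v])
          (by linarith [sq_nonneg V]) hEV
    _ ≤ (|E ^ 2 - V ^ 2| ^ (κ - 1) + κ * (a ^ 2) ^ (κ - 1)) * (3 * V * |v - V|) := by gcongr
    _ = _ := (mul_assoc _ _ _).symm

lemma integrableOn_mul_truncPow_sq_sub_sq (hκ : 0 < κ)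
    (hf : AEStronglyMeasurable f (volume.restrict (Set.Ioc 0 a)))
    (hM : ∀ᵐ E ∂volume.restrict (Set.Ioc 0 a), ‖f E‖ ≤ M) (V : ℝ) :
    IntegrableOn (fun E ↦ f E * truncPow κ (E ^ 2 - V ^ 2)) (Set.Ioc 0 a) := by
  have h_cont : Continuous fun E : ℝ ↦ truncPow κ (E ^ 2 - V ^ 2) :=
    (continuous_truncPow hκ).comp (by fun_prop)
  exact (h_cont.integrableOn_Ioc).bdd_mul hf hM

lemma hasDerivAt_truncMoment (hκ : 0 < κ) (hV : 0 < V)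
    (hf : AEStronglyMeasurable f (volume.restrict (Set.Ioc 0 a)))
    (hM : ∀ᵐ E ∂volume.restrict (Set.Ioc 0 a), ‖f E‖ ≤ M) :
    HasDerivAt (truncMoment f a κ) (-(2 * κ * V) * truncMoment f a (κ - 1) V) V := by
  have h_ne : ∀ᵐ E ∂volume.restrict (Set.Ioc 0 a), E ≠ V :=
    ae_restrict_of_ae (Measure.ae_ne volume V)
  have h_mem : ∀ᵐ E ∂volume.restrict (Set.Ioc 0 a), E ∈ Set.Ioc 0 a :=
    ae_restrict_mem measurableSet_Ioc
  have h_sq_ne {E : ℝ} (hE : E ∈ Set.Ioc 0 a) (hEV : E ≠ V) : E ^ 2 - V ^ 2 ≠ 0 :=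
    sub_ne_zero.2 fun h ↦ hEV ((pow_left_inj₀ hE.1.le hV.le two_ne_zero).1 h)
  have h_meas (κ v : ℝ) : Measurable fun E : ℝ ↦ truncPow κ (E ^ 2 - v ^ 2) :=
    (measurable_truncPow κ).comp (by fun_prop)
  have h_bound_integrable : Integrable (fun E : ℝ ↦
      M * ((|E ^ 2 - V ^ 2| ^ (κ - 1) + κ * (a ^ 2) ^ (κ - 1)) * (3 * V)))
      (volume.restrict (Set.Ioc 0 a)) :=
    (((integrableOn_abs_sq_sub_sq_rpow (by linarith) hV).add
      (integrable_const _)).mul_const _).const_mul M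
  refine (hasDerivAt_integral_of_dominated_sub_base (Ioo_mem_nhds hV (by linarith : V < 2 * V))
    (fun v _ ↦ hf.mul (h_meas κ v).aestronglyMeasurable)
    (integrableOn_mul_truncPow_sq_sub_sq hκ hf hM V)
    (hf.mul ((h_meas (κ - 1) V).const_mul (-(2 * κ * V))).aestronglyMeasurable)
    ?_ h_bound_integrable ?_).congr_deriv ?_
  · filter_upwards [h_ne, h_mem, hM] with E hEV hE hfE v hv
    rw [Pi.mul_apply, Pi.mul_apply, ← mul_sub, norm_mul, mul_assoc]
    exact mul_le_mul hfE (abs_truncPow_sq_sub_sq_sub_le hκ hE (h_sq_ne hE hEV) hv) (norm_nonneg _)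
      ((norm_nonneg _).trans hfE)
  · filter_upwards [h_ne, h_mem] with E hEV hE
    exact (hasDerivAt_truncPow_sq_sub_sq κ (h_sq_ne hE hEV)).const_mul (f E)
  · simp only [truncMoment, ← integral_const_mul, Pi.mul_apply, mul_left_comm]

lemma sq_div_sq_sub_one_rpow {E : ℝ} (κ : ℝ) (hV : 0 < V) (hVE : V < E) :
    (E ^ 2 / V ^ 2 - 1) ^ κ = V ^ (-(2 * κ)) * truncPow κ (E ^ 2 - V ^ 2) := by
  have h_pos : 0 < E ^ 2 - V ^ 2 := sub_pos.2 (pow_lt_pow_left₀ hVE hV.le two_ne_zero)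
  rw [truncPow_of_pos h_pos, div_sub_one (pow_pos hV 2).ne', Real.div_rpow h_pos.le (sq_nonneg V),
    ← Real.rpow_natCast_mul hV.le, Real.rpow_neg hV.le, Nat.cast_ofNat, div_eq_inv_mul]

lemma integral_mul_sq_div_sq_sub_one_rpow (f : ℝ → ℝ) (κ : ℝ) (hV : 0 < V) (hVa : V ≤ a) :
    ∫ E in V..a, f E * (E ^ 2 / V ^ 2 - 1) ^ κ = V ^ (-(2 * κ)) * truncMoment f a κ V := by
  have h_vanish : ∀ E ∈ Set.Ioc 0 a \ Set.Ioc V a, f E * truncPow κ (E ^ 2 - V ^ 2) = 0 := by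
    intro E ⟨hE, hE_notMem⟩
    have hEV : E ≤ V := not_lt.1 fun h ↦ hE_notMem ⟨h, hE.2⟩
    rw [truncPow_of_nonpos (sub_nonpos.2 (pow_le_pow_left₀ hE.1.le hEV 2)), mul_zero]
  rw [truncMoment, setIntegral_eq_of_subset_of_forall_sdiff_eq_zero measurableSet_Ioc
    (Set.Ioc_subset_Ioc_left hV.le) h_vanish, intervalIntegral.integral_of_le hVa,
    ← integral_const_mul]
  refine setIntegral_congr_fun measurableSet_Ioc fun E hE ↦ ?_
  rw [sq_div_sq_sub_one_rpow κ hV hE.1, mul_left_comm]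

end TruncMoment

theorem stmt_7_general {E₀ M κ : ℝ} {φ : ℝ → ℝ} (hκ : 0 < κ) (hφ : Measurable φ)
    (hM : ∀ x ∈ Set.Icc (0 : ℝ) 1, |φ x| ≤ M) {ξ : ℝ → ℝ → ℝ}
    (hξ : ∀ κ V, ξ κ V =
      (4 * Real.pi / V) * ∫ E in V..E₀, φ (1 - E / E₀) * (E ^ 2 / V ^ 2 - 1) ^ κ)
    {V : ℝ} (hV : V ∈ Set.Ioo 0 E₀) :
    HasDerivAt (ξ κ) (-(1 / V) * ((2 * κ + 1) * ξ κ V + 2 * κ * ξ (κ - 1) V)) V := by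
  set f : ℝ → ℝ := fun E ↦ φ (1 - E / E₀)
  have hf : Measurable f := hφ.comp (by fun_prop)
  have hfM : ∀ᵐ E ∂volume.restrict (Set.Ioc 0 E₀), ‖f E‖ ≤ M := by
    refine ae_restrict_of_forall_mem measurableSet_Ioc fun E hE ↦ hM _ ⟨?_, ?_⟩
    · exact sub_nonneg.2 (div_le_one_of_le₀ hE.2 (hE.1.le.trans hE.2))
    · exact sub_le_self _ (div_nonneg hE.1.le (hE.1.le.trans hE.2))
  have hξ_eq (κ : ℝ) {v : ℝ} (hv : v ∈ Set.Ioo 0 E₀) :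
      ξ κ v = 4 * Real.pi * (v ^ (-(2 * κ) - 1) * truncMoment f E₀ κ v) := by
    rw [hξ, integral_mul_sq_div_sq_sub_one_rpow f κ hv.1 hv.2.le, Real.rpow_sub_one hv.1.ne']
    ring
  have h_deriv := ((Real.hasDerivAt_rpow_const (p := -(2 * κ) - 1) (Or.inl hV.1.ne')).mul
    (hasDerivAt_truncMoment hκ hV.1 hf.aestronglyMeasurable hfM)).const_mul (4 * Real.pi)
  refine (h_deriv.congr_of_eventuallyEq ?_).congr_deriv ?_
  · filter_upwards [Ioo_mem_nhds hV.1 hV.2] with v hv using hξ_eq κ hv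
  · have h_rpow : V ^ (-(2 * (κ - 1)) - 1) = V ^ (-(2 * κ) - 1) * V ^ 2 := by
      rw [← Real.rpow_add_natCast hV.1.ne']
      congr 1
      push_cast
      ring
    rw [hξ_eq κ hV, hξ_eq (κ - 1) hV, h_rpow, Real.rpow_sub_one hV.1.ne' (-(2 * κ) - 1)]
    field_simp [hV.1.ne']
    ring

/-- Second derivative formula of Lemma 4.6:
`ξ_{1/2}'(V) = -(1/V)(2 ξ_{1/2}(V) + ξ_{-1/2}(V))` on `(0, E₀)`. -/
theorem stmt_7 (E₀ : ℝ) (hE₀ : 0 < E₀) (φ : ℝ → ℝ)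
    (hcont : Continuous φ) (hbd : ∃ M, ∀ x, |φ x| ≤ M)
    (hnn : ∀ x, 0 ≤ φ x) (hzero : ∀ x < (0 : ℝ), φ x = 0)
    (ξ : ℝ → ℝ → ℝ)
    (hξ : ∀ κ V, ξ κ V =
      (4 * Real.pi / V) * ∫ E in V..E₀, φ (1 - E / E₀) * (E ^ 2 / V ^ 2 - 1) ^ κ) :
    ∀ V ∈ Set.Ioo (0 : ℝ) E₀,
      HasDerivAt (ξ (1/2)) (-(1 / V) * (2 * ξ (1/2) V + ξ (-1/2) V)) V := by
  intro V hV
  obtain ⟨M, hM⟩ := hbd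
  convert stmt_7_general (κ := 1 / 2) (by norm_num) hcont.measurable (fun x _ ↦ hM x) hξ hV
    using 3 <;> norm_num
end

section
/- Fix E₀ > 0, let n ∈ ℕ with n ≤ 3, and let φ : ℝ → ℝ be nonnegative, vanish on (−∞, 0), be real-analytic on [0,1], and satisfy φ^{(k)}(0) = 0 for 0 ≤ k ≤ n−1 and φ^{(n)}(0) > 0. For κ ∈ {1/2, −1/2} define ξ_κ(V) = (4π/V) ∫_V^{E₀} φ(1 − E/E₀)(E²/V² − 1)^κ dE, and define ζ(V) = ζ₁(V) + ζ₂(V), where ζ₁(V) = 4π ∫_V^{E₀} φ′(1 − E/E₀) · ((E₀ − E)/(E₀(E₀ − V))) · (E²/V² − 1)^{−1/2} dE and ζ₂(V) = −(4π/(E₀ − V)) ∫_V^{E₀} φ(1 − E/E₀)(E²/V² − 1)^{−1/2}(E E₀/((E + V)V) − 1) dE. Then there exists V* ∈ (0, E₀) such that for all V ∈ (V*, E₀): | ξ_{1/2}(V) ζ(V) / ξ_{−1/2}(V)² | < 4/5. -/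
open MeasureTheory

/-!
The quotient converges to `(2 * n + 1) / (2 * n + 3)` as `V → E₀⁻`, which is at most
`7 / 9 < 4 / 5` for `n ≤ 3`.

Write `φ(x) ~ c xⁿ` and `x φ'(x) ~ n c xⁿ` as `x → 0⁺`, and
`E² / V² - 1 = (E - V) (E + V) / V²`. As `V < E < E₀` all approach `E₀`, each of the integrands
is asymptotic to a constant multiple of `(E₀ - E)ⁿ (E - V)^κ`, and so are the integrals. All
constants cancel except `2 (n + 1 / 2)`, where `n` comes from `ζ₁` and `1 / 2` from `ζ₂`, and the
ratio of the model integrals for `κ = 1 / 2` and `κ = -1 / 2`, which an integration by parts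
evaluates to `(E₀ - V) / (2 * n + 3)`.
-/

open Filter Set Topology

theorem exists_eventuallyEq_pow_smul_of_iteratedDerivWithin {𝕜 F : Type*}
    [NontriviallyNormedField 𝕜] [CharZero 𝕜] [NormedAddCommGroup F] [NormedSpace 𝕜 F]
    [CompleteSpace F] {f : 𝕜 → F} {s : Set 𝕜} {x₀ : 𝕜} {n : ℕ} (hs : UniqueDiffOn 𝕜 s)
    (hx₀ : x₀ ∈ s) (hf : AnalyticWithinAt 𝕜 f s x₀)
    (hlt : ∀ k < n, iteratedDerivWithin k f s x₀ = 0) (hn : iteratedDerivWithin n f s x₀ ≠ 0) :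
    ∃ h : 𝕜 → F, AnalyticAt 𝕜 h x₀ ∧ h x₀ ≠ 0 ∧ ∀ᶠ x in 𝓝[s] x₀, f x = (x - x₀) ^ n • h x := by
  obtain ⟨g, -, hfg, hg⟩ := hf.exists_analyticAt
  rw [insert_eq_of_mem hx₀] at hfg
  have hiter (k : ℕ) : iteratedDerivWithin k f s x₀ = iteratedDeriv k g x₀ :=
    (iteratedDerivWithin_congr hfg hx₀).trans
      (iteratedDerivWithin_eq_iteratedDeriv hs hg.contDiffAt hx₀)
  have horder : analyticOrderAt g x₀ = n :=
    (analyticOrderAt_eq_nat_iff_iteratedDeriv_eq_zero hg).2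
      ⟨fun k hk ↦ hiter k ▸ hlt k hk, hiter n ▸ hn⟩
  obtain ⟨h, hh, hh₀, hgh⟩ := hg.analyticOrderAt_eq_natCast.1 horder
  refine ⟨h, hh, hh₀, ?_⟩
  filter_upwards [self_mem_nhdsWithin, hgh.filter_mono nhdsWithin_le_nhds] with x hx hgx
  rw [hfg hx, hgx]

theorem tendsto_div_pow_of_eventuallyEq {f h : ℝ → ℝ} {n : ℕ} (hh : ContinuousAt h 0)
    (hf : ∀ᶠ x in 𝓝[>] 0, f x = x ^ n * h x) :
    Tendsto (fun x ↦ f x / x ^ n) (𝓝[>] 0) (𝓝 (h 0)) := by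
  refine (hh.tendsto.mono_left nhdsWithin_le_nhds).congr' ?_
  filter_upwards [self_mem_nhdsWithin, hf] with x (hx : 0 < x) hfx
  rw [hfx, mul_div_cancel_left₀ _ (pow_pos hx n).ne']

theorem tendsto_mul_deriv_div_pow_of_eventuallyEq {f h : ℝ → ℝ} {n : ℕ} (hh : AnalyticAt ℝ h 0)
    (hf : ∀ᶠ x in 𝓝[>] 0, f x = x ^ n * h x) :
    Tendsto (fun x ↦ x * deriv f x / x ^ n) (𝓝[>] 0) (𝓝 (n * h 0)) := by
  have hlim : Tendsto (fun x ↦ n * h x + x * deriv h x) (𝓝[>] 0) (𝓝 (n * h 0)) := by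
    have hcont : ContinuousAt (fun x ↦ n * h x + x * deriv h x) 0 :=
      (continuousAt_const.mul hh.continuousAt).add (continuousAt_id.mul hh.deriv.continuousAt)
    simpa using hcont.tendsto.mono_left nhdsWithin_le_nhds
  refine hlim.congr' ?_
  filter_upwards [self_mem_nhdsWithin, eventually_eventually_nhdsWithin.2 hf,
    hh.eventually_analyticAt.filter_mono nhdsWithin_le_nhds] with x (hx : 0 < x) hfx hhx
  rw [isOpen_Ioi.nhdsWithin_eq hx] at hfx
  have hderiv : deriv f x = n * x ^ (n - 1) * h x + x ^ n * deriv h x :=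
    (EventuallyEq.deriv_eq hfx).trans
      ((hasDerivAt_pow n x).mul hhx.differentiableAt.hasDerivAt).deriv
  have hpow : x * (n * x ^ (n - 1)) = n * x ^ n := by
    rcases n with _ | m
    · simp
    · simp [pow_succ]; ring
  rw [hderiv, eq_div_iff (pow_pos hx n).ne']
  linear_combination -h x * hpow

theorem exists_mem_Ioo_forall_abs_lt_of_tendsto_nhdsLT {f : ℝ → ℝ} {a b c r : ℝ}
    (hf : Tendsto f (𝓝[<] b) (𝓝 c)) (hab : a < b) (hc : |c| < r) :
    ∃ s ∈ Ioo a b, ∀ x ∈ Ioo s b, |f x| < r := by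
  obtain ⟨m, ham, hmb⟩ := exists_between hab
  obtain ⟨s, hs, hsub⟩ := (mem_nhdsLT_iff_exists_mem_Ico_Ioo_subset hmb).1
    (hf.abs.eventually_lt_const hc)
  exact ⟨s, ⟨ham.trans_le hs.1, hs.2⟩, hsub⟩

theorem abs_integral_div_integral_sub_le {α : Type*} [MeasurableSpace α] {μ : Measure α}
    {f k : α → ℝ} {c ε : ℝ} (hf : AEStronglyMeasurable f μ) (hk : Integrable k μ)
    (hpos : 0 < ∫ x, k x ∂μ) (hfk : ∀ᵐ x ∂μ, |f x - c * k x| ≤ ε * k x) :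
    |(∫ x, f x ∂μ) / (∫ x, k x ∂μ) - c| ≤ ε := by
  have hdiff : Integrable (fun x ↦ f x - c * k x) μ :=
    (hk.const_mul ε).mono' (hf.sub (hk.const_mul c).aestronglyMeasurable) hfk
  have hf_int : Integrable f μ := by
    simpa only [sub_add_cancel] using hdiff.fun_add (hk.const_mul c)
  have hbound : |(∫ x, f x ∂μ) - c * ∫ x, k x ∂μ| ≤ ε * ∫ x, k x ∂μ := by
    rw [← integral_const_mul, ← integral_const_mul, ← integral_sub hf_int (hk.const_mul c)]
    exact norm_integral_le_of_norm_le (f := fun x ↦ f x - c * k x) (hk.const_mul ε) hfk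
  rwa [div_sub' hpos.ne', abs_div, abs_of_pos hpos, div_le_iff₀ hpos, mul_comm _ c]

/-- The filter of pairs `(a, x)` tending to `(b, b)` subject to `a < x < b`. Convergence along it is
uniform convergence in `x ∈ (a, b)` as `a → b⁻`. -/
def wedge (b : ℝ) : Filter (ℝ × ℝ) := 𝓝[{p | p.1 < p.2 ∧ p.2 < b}] (b, b)

theorem wedge_le_nhds (b : ℝ) : wedge b ≤ 𝓝 (b, b) := nhdsWithin_le_nhds

theorem eventually_wedge_mem (b : ℝ) : ∀ᶠ p in wedge b, p.1 < p.2 ∧ p.2 < b :=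
  self_mem_nhdsWithin

theorem eventually_forall_mem_Ioo_of_eventually_wedge {b : ℝ} {P : ℝ × ℝ → Prop}
    (hP : ∀ᶠ p in wedge b, P p) : ∀ᶠ a in 𝓝[<] b, ∀ x ∈ Ioo a b, P (a, x) := by
  obtain ⟨δ, hδ, hball⟩ := Metric.mem_nhdsWithin_iff.1 hP
  filter_upwards [Ioo_mem_nhdsLT (sub_lt_self b hδ)] with a ha x hx
  refine hball ⟨?_, hx⟩
  rw [Metric.mem_ball, Prod.dist_eq, max_lt_iff, Real.dist_eq, Real.dist_eq, abs_lt, abs_lt]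
  constructor <;> constructor <;> dsimp only <;> linarith [ha.1, ha.2, hx.1, hx.2]

theorem tendsto_integral_div_integral_nhdsLT {F k : ℝ → ℝ → ℝ} {b c : ℝ}
    (hF : ∀ᶠ a in 𝓝[<] b, AEStronglyMeasurable (F a) (volume.restrict (Ioo a b)))
    (hk : ∀ᶠ a in 𝓝[<] b, IntervalIntegrable (k a) volume a b)
    (hpos : ∀ᶠ p in wedge b, 0 < k p.1 p.2)
    (hlim : Tendsto (fun p ↦ F p.1 p.2 / k p.1 p.2) (wedge b) (𝓝 c)) :
    Tendsto (fun a ↦ (∫ x in a..b, F a x) / ∫ x in a..b, k a x) (𝓝[<] b) (𝓝 c) := by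
  refine Metric.tendsto_nhds.2 fun ε hε ↦ ?_
  have hclose := hlim.eventually (Metric.closedBall_mem_nhds c (half_pos hε))
  filter_upwards [self_mem_nhdsWithin, hF, hk,
    eventually_forall_mem_Ioo_of_eventually_wedge (hpos.and hclose)] with a (hab : a < b) hFa hka h
  have hint_pos : 0 < ∫ x in a..b, k a x :=
    intervalIntegral.intervalIntegral_pos_of_pos_on hka (fun x hx ↦ (h x hx).1) hab
  rw [intervalIntegrable_iff_integrableOn_Ioo_of_le hab.le] at hka
  simp only [intervalIntegral.integral_of_le hab.le, integral_Ioc_eq_integral_Ioo] at hint_pos ⊢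
  refine (abs_integral_div_integral_sub_le hFa hka hint_pos ?_).trans_lt (half_lt_self hε)
  filter_upwards [ae_restrict_mem measurableSet_Ioo] with x hx
  obtain ⟨hkx, hx_close⟩ := h x hx
  rwa [Real.dist_eq, div_sub' hkx.ne', abs_div, abs_of_pos hkx,
    div_le_iff₀ hkx, mul_comm _ c] at hx_close

/-- The model integrand `(b - x) ^ n * (x - a) ^ s` on `(a, b)`, to which the integrands of the
paper are compared as `a → b`. -/
noncomputable def betaKernel (b : ℝ) (n : ℕ) (s a x : ℝ) : ℝ := (b - x) ^ n * (x - a) ^ s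

section BetaKernel

variable {a b s : ℝ} (n : ℕ)

theorem betaKernel_pos {x : ℝ} (hx : x ∈ Ioo a b) : 0 < betaKernel b n s a x :=
  mul_pos (pow_pos (sub_pos.2 hx.2) n) (Real.rpow_pos_of_pos (sub_pos.2 hx.1) s)

theorem intervalIntegrable_betaKernel (hs : -1 < s) :
    IntervalIntegrable (betaKernel b n s a) volume a b := by
  have hpow : IntervalIntegrable (fun x ↦ (x - a) ^ s) volume a b := by
    simpa using
      (intervalIntegral.intervalIntegrable_rpow' (a := 0) (b := b - a) hs).comp_sub_right a
  exact hpow.continuousOn_mul (by fun_prop)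

theorem integral_betaKernel_pos (hab : a < b) (hs : -1 < s) :
    0 < ∫ x in a..b, betaKernel b n s a x :=
  intervalIntegral.intervalIntegral_pos_of_pos_on (intervalIntegrable_betaKernel n hs)
    (fun _ hx ↦ betaKernel_pos n hx) hab

theorem hasDerivAt_pow_succ_mul_rpow_add_one {x : ℝ} (hx : a < x) :
    HasDerivAt (fun x ↦ (b - x) ^ (n + 1) * (x - a) ^ (s + 1))
      ((s + 1) * (b - a) * betaKernel b n s a x - (n + s + 2) * betaKernel b n (s + 1) a x) x := by
  have hxa : 0 < x - a := sub_pos.2 hx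
  have hleft := ((hasDerivAt_id x).const_sub b).pow (n + 1)
  have hright := ((hasDerivAt_id x).sub_const a).rpow_const (p := s + 1) (Or.inl hxa.ne')
  refine (hleft.mul hright).congr_deriv ?_
  simp only [betaKernel, id, Pi.pow_apply, Real.rpow_add_one hxa.ne', add_sub_cancel_right,
    Nat.add_sub_cancel, Nat.cast_add, Nat.cast_one]
  ring

theorem integral_betaKernel_add_one (hab : a < b) (hs : -1 < s) :
    ∫ x in a..b, betaKernel b n (s + 1) a x =
      (s + 1) * (b - a) / (n + s + 2) * ∫ x in a..b, betaKernel b n s a x := by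
  have hint := (intervalIntegrable_betaKernel (a := a) (b := b) n hs).const_mul ((s + 1) * (b - a))
  have hint' := (intervalIntegrable_betaKernel (a := a) (b := b) (s := s + 1) n
    (by linarith)).const_mul (n + s + 2)
  have hcont : ContinuousOn (fun x ↦ (b - x) ^ (n + 1) * (x - a) ^ (s + 1)) (Icc a b) := by
    refine ContinuousOn.mul (by fun_prop) ?_
    exact ContinuousOn.rpow_const (by fun_prop) fun x _ ↦ Or.inr (by linarith)
  have hftc := intervalIntegral.integral_eq_sub_of_hasDerivAt_of_le hab.le hcont
    (fun x hx ↦ hasDerivAt_pow_succ_mul_rpow_add_one n hx.1) (hint.sub hint')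
  rw [intervalIntegral.integral_sub hint hint', intervalIntegral.integral_const_mul,
    intervalIntegral.integral_const_mul, sub_self, sub_self, zero_pow n.succ_ne_zero,
    Real.zero_rpow (by linarith), zero_mul, mul_zero, sub_zero, sub_eq_zero] at hftc
  have hden : (n : ℝ) + s + 2 ≠ 0 := by linarith [(Nat.cast_nonneg n : (0 : ℝ) ≤ n)]
  rw [div_mul_eq_mul_div, eq_div_iff hden, hftc, mul_comm]

theorem integral_betaKernel_one_half (hab : a < b) :
    ∫ x in a..b, betaKernel b n (1 / 2) a x =
      (b - a) / (2 * n + 3) * ∫ x in a..b, betaKernel b n (-1 / 2) a x := by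
  have hcoeff : (-1 / 2 + 1) * (b - a) / (n + -1 / 2 + 2) = (b - a) / (2 * n + 3) := by
    rw [show (n : ℝ) + -1 / 2 + 2 = (2 * n + 3) / 2 by ring]
    field_simp
    norm_num
  rw [← hcoeff, ← integral_betaKernel_add_one n hab (by norm_num)]
  norm_num

end BetaKernel

section IntegrandLimits

variable {E₀ : ℝ}

theorem tendsto_rpow_div_rpow_wedge (hE₀ : 0 < E₀) (κ : ℝ) :
    Tendsto (fun p : ℝ × ℝ ↦ (p.2 ^ 2 / p.1 ^ 2 - 1) ^ κ / (p.2 - p.1) ^ κ) (wedge E₀)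
      (𝓝 ((2 / E₀) ^ κ)) := by
  have hcont : ContinuousAt (fun p : ℝ × ℝ ↦ ((p.2 + p.1) / p.1 ^ 2) ^ κ) (E₀, E₀) := by
    refine ContinuousAt.rpow_const (ContinuousAt.div (by fun_prop) (by fun_prop) ?_) (Or.inl ?_)
    · positivity
    · positivity
  have hval : (E₀ + E₀) / E₀ ^ 2 = 2 / E₀ := by field_simp; ring
  have hlim := hcont.tendsto.mono_left (wedge_le_nhds E₀)
  simp only [hval] at hlim
  refine hlim.congr' ?_
  filter_upwards [eventually_wedge_mem E₀,
    (continuousAt_fst.eventually (lt_mem_nhds hE₀)).filter_mono (wedge_le_nhds E₀)]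
    with ⟨V, E⟩ ⟨(hVE : V < E), _⟩ (hV : 0 < V)
  have hEV : 0 < E - V := sub_pos.2 hVE
  have hfactor : E ^ 2 / V ^ 2 - 1 = (E - V) * ((E + V) / V ^ 2) := by field_simp; ring
  have hquot : 0 < (E + V) / V ^ 2 := by have := hV.trans hVE; positivity
  rw [hfactor, Real.mul_rpow hEV.le hquot.le,
    mul_div_cancel_left₀ _ (Real.rpow_pos_of_pos hEV κ).ne']

theorem tendsto_one_sub_div_wedge (hE₀ : 0 < E₀) :
    Tendsto (fun p : ℝ × ℝ ↦ 1 - p.2 / E₀) (wedge E₀) (𝓝[>] 0) := by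
  refine tendsto_nhdsWithin_iff.2 ⟨?_, ?_⟩
  · have hcont : ContinuousAt (fun p : ℝ × ℝ ↦ 1 - p.2 / E₀) (E₀, E₀) := by fun_prop
    simpa [div_self hE₀.ne'] using hcont.tendsto.mono_left (wedge_le_nhds E₀)
  · filter_upwards [eventually_wedge_mem E₀] with p hp
    exact sub_pos.2 ((div_lt_one hE₀).2 hp.2)

theorem tendsto_comp_one_sub_div_wedge (hE₀ : 0 < E₀) {ψ : ℝ → ℝ} {n : ℕ} {c : ℝ}
    (hψ : Tendsto (fun x ↦ ψ x / x ^ n) (𝓝[>] 0) (𝓝 c)) :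
    Tendsto (fun p : ℝ × ℝ ↦ ψ (1 - p.2 / E₀) / (E₀ - p.2) ^ n) (wedge E₀) (𝓝 (c / E₀ ^ n)) := by
  refine ((hψ.comp (tendsto_one_sub_div_wedge hE₀)).div_const (E₀ ^ n)).congr fun p ↦ ?_
  rw [Function.comp_apply, div_div, ← mul_pow, sub_mul, div_mul_cancel₀ _ hE₀.ne', one_mul]

theorem tendsto_mul_div_add_mul_sub_one_wedge (hE₀ : 0 < E₀) :
    Tendsto (fun p : ℝ × ℝ ↦ p.2 * E₀ / ((p.2 + p.1) * p.1) - 1) (wedge E₀) (𝓝 (-1 / 2)) := by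
  have hcont : ContinuousAt (fun p : ℝ × ℝ ↦ p.2 * E₀ / ((p.2 + p.1) * p.1) - 1) (E₀, E₀) :=
    (ContinuousAt.div (by fun_prop) (by fun_prop) (by positivity)).sub continuousAt_const
  have hval : E₀ * E₀ / ((E₀ + E₀) * E₀) - 1 = -1 / 2 := by field_simp; norm_num
  simpa only [hval] using hcont.tendsto.mono_left (wedge_le_nhds E₀)

theorem aestronglyMeasurable_comp_one_sub_div (hE₀ : 0 < E₀) {ψ : ℝ → ℝ} {V : ℝ}
    (hψ : ContinuousOn ψ (Ioo 0 1)) (hV : 0 < V) :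
    AEStronglyMeasurable (fun E ↦ ψ (1 - E / E₀)) (volume.restrict (Ioo V E₀)) := by
  refine ContinuousOn.aestronglyMeasurable (hψ.comp (by fun_prop) fun E hE ↦ ?_) measurableSet_Ioo
  have hpos : 0 < E / E₀ := div_pos (hV.trans hE.1) hE₀
  have hlt : E / E₀ < 1 := (div_lt_one hE₀).2 hE.2
  exact ⟨sub_pos.2 hlt, sub_lt_self 1 hpos⟩

theorem tendsto_integral_div_integral_betaKernel (hE₀ : 0 < E₀) {ψ : ℝ → ℝ}
    {w : ℝ → ℝ → ℝ} {n : ℕ} {κ c d : ℝ}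
    (hκ : -1 < κ) (hψ_cont : ContinuousOn ψ (Ioo 0 1))
    (hψ : Tendsto (fun x ↦ ψ x / x ^ n) (𝓝[>] 0) (𝓝 c)) (hw_meas : ∀ V, Measurable (w V))
    (hw : Tendsto (fun p ↦ w p.1 p.2) (wedge E₀) (𝓝 d)) :
    Tendsto (fun V ↦ (∫ E in V..E₀, ψ (1 - E / E₀) * (E ^ 2 / V ^ 2 - 1) ^ κ * w V E) /
        ∫ E in V..E₀, betaKernel E₀ n κ V E) (𝓝[<] E₀)
      (𝓝 (c / E₀ ^ n * (2 / E₀) ^ κ * d)) := by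
  refine tendsto_integral_div_integral_nhdsLT ?_
    (Eventually.of_forall fun V ↦ intervalIntegrable_betaKernel n hκ)
    ((eventually_wedge_mem E₀).mono fun p hp ↦ betaKernel_pos n hp) ?_
  · filter_upwards [Ioo_mem_nhdsLT hE₀] with V hV
    have hrpow : Measurable fun E : ℝ ↦ (E ^ 2 / V ^ 2 - 1) ^ κ := by fun_prop
    exact ((aestronglyMeasurable_comp_one_sub_div hE₀ hψ_cont hV.1).mul
      hrpow.aestronglyMeasurable).mul (hw_meas V).aestronglyMeasurable
  · refine (((tendsto_comp_one_sub_div_wedge hE₀ hψ).mul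
      (tendsto_rpow_div_rpow_wedge hE₀ κ)).mul hw).congr fun p ↦ ?_
    rw [betaKernel, div_mul_div_comm, div_mul_eq_mul_div]

end IntegrandLimits

/-- The moment integral `ξ_κ(V)` of the ansatz function `φ` with cut-off energy `E₀`. -/
noncomputable def surfaceMoment (φ : ℝ → ℝ) (E₀ κ V : ℝ) : ℝ :=
  (4 * Real.pi / V) * ∫ E in V..E₀, φ (1 - E / E₀) * (E ^ 2 / V ^ 2 - 1) ^ κ

/-- The part `ζ₁(V)` of the derivative of `ξ_{-1/2}` that comes from differentiating `φ`. -/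
noncomputable def zetaOne (φ : ℝ → ℝ) (E₀ V : ℝ) : ℝ :=
  4 * Real.pi * ∫ E in V..E₀,
    deriv φ (1 - E / E₀) * ((E₀ - E) / (E₀ * (E₀ - V))) * (E ^ 2 / V ^ 2 - 1) ^ (-(1 : ℝ) / 2)

/-- The part `ζ₂(V)` of the derivative of `ξ_{-1/2}` that does not involve the derivative
of `φ`. -/
noncomputable def zetaTwo (φ : ℝ → ℝ) (E₀ V : ℝ) : ℝ :=
  -(4 * Real.pi / (E₀ - V)) * ∫ E in V..E₀,
    φ (1 - E / E₀) * (E ^ 2 / V ^ 2 - 1) ^ (-(1 : ℝ) / 2) * (E * E₀ / ((E + V) * V) - 1)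

section Moments

variable {E₀ c : ℝ} {φ : ℝ → ℝ} {n : ℕ}

theorem tendsto_surfaceMoment_div_integral_betaKernel (hE₀ : 0 < E₀) {κ : ℝ} (hκ : -1 < κ)
    (hφ_cont : ContinuousOn φ (Ioo 0 1)) (hφ : Tendsto (fun x ↦ φ x / x ^ n) (𝓝[>] 0) (𝓝 c)) :
    Tendsto (fun V ↦ surfaceMoment φ E₀ κ V / ∫ E in V..E₀, betaKernel E₀ n κ V E) (𝓝[<] E₀)
      (𝓝 (4 * Real.pi / E₀ * (c / E₀ ^ n * (2 / E₀) ^ κ))) := by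
  have hprefactor : Tendsto (fun V ↦ 4 * Real.pi / V) (𝓝[<] E₀) (𝓝 (4 * Real.pi / E₀)) :=
    (continuousAt_const.div continuousAt_id hE₀.ne').tendsto.mono_left nhdsWithin_le_nhds
  have hintegral := tendsto_integral_div_integral_betaKernel hE₀ hκ hφ_cont hφ
    (w := fun _ _ ↦ 1) (fun _ ↦ measurable_const) tendsto_const_nhds
  simp only [mul_one] at hintegral
  exact (hprefactor.mul hintegral).congr fun V ↦ (mul_div_assoc _ _ _).symm

theorem tendsto_mul_zetaOne_div_integral_betaKernel (hE₀ : 0 < E₀)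
    (hφ'_cont : ContinuousOn (deriv φ) (Ioo 0 1))
    (hφ' : Tendsto (fun x ↦ x * deriv φ x / x ^ n) (𝓝[>] 0) (𝓝 c)) :
    Tendsto (fun V ↦ (E₀ - V) * zetaOne φ E₀ V / ∫ E in V..E₀, betaKernel E₀ n (-1 / 2) V E)
      (𝓝[<] E₀) (𝓝 (4 * Real.pi * (c / E₀ ^ n * (2 / E₀) ^ (-1 / 2 : ℝ)))) := by
  have hintegral := tendsto_integral_div_integral_betaKernel hE₀ (κ := -1 / 2) (by norm_num)
    (continuousOn_id.mul hφ'_cont) hφ' (w := fun _ _ ↦ 1) (fun _ ↦ measurable_const)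
    tendsto_const_nhds
  simp only [mul_one] at hintegral
  refine (hintegral.const_mul (4 * Real.pi)).congr' ?_
  filter_upwards [self_mem_nhdsWithin] with V (hV : V < E₀)
  have hEV : E₀ - V ≠ 0 := (sub_pos.2 hV).ne'
  rw [zetaOne, mul_left_comm, mul_div_assoc, ← intervalIntegral.integral_const_mul]
  congr 3 with E
  simp only [id, Pi.mul_apply]
  field_simp

theorem tendsto_mul_zetaTwo_div_integral_betaKernel (hE₀ : 0 < E₀)
    (hφ_cont : ContinuousOn φ (Ioo 0 1)) (hφ : Tendsto (fun x ↦ φ x / x ^ n) (𝓝[>] 0) (𝓝 c)) :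
    Tendsto (fun V ↦ (E₀ - V) * zetaTwo φ E₀ V / ∫ E in V..E₀, betaKernel E₀ n (-1 / 2) V E)
      (𝓝[<] E₀) (𝓝 (4 * Real.pi * (c / E₀ ^ n * (2 / E₀) ^ (-1 / 2 : ℝ) / 2))) := by
  have hintegral := tendsto_integral_div_integral_betaKernel hE₀ (κ := -1 / 2) (by norm_num)
    hφ_cont hφ (w := fun V E ↦ E * E₀ / ((E + V) * V) - 1) (fun _ ↦ by fun_prop)
    (tendsto_mul_div_add_mul_sub_one_wedge hE₀)
  convert (hintegral.const_mul (-(4 * Real.pi))).congr' ?_ using 2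
  · ring
  filter_upwards [self_mem_nhdsWithin] with V (hV : V < E₀)
  have hEV : E₀ - V ≠ 0 := (sub_pos.2 hV).ne'
  rw [zetaTwo, mul_div_assoc', ← mul_assoc, mul_neg, mul_div_cancel₀ _ hEV]

theorem tendsto_mul_zeta_div_integral_betaKernel (hE₀ : 0 < E₀)
    (hφ_cont : ContinuousOn φ (Ioo 0 1)) (hφ'_cont : ContinuousOn (deriv φ) (Ioo 0 1))
    (hφ : Tendsto (fun x ↦ φ x / x ^ n) (𝓝[>] 0) (𝓝 c))
    (hφ' : Tendsto (fun x ↦ x * deriv φ x / x ^ n) (𝓝[>] 0) (𝓝 (n * c))) :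
    Tendsto (fun V ↦ (E₀ - V) * (zetaOne φ E₀ V + zetaTwo φ E₀ V) /
        ∫ E in V..E₀, betaKernel E₀ n (-1 / 2) V E) (𝓝[<] E₀)
      (𝓝 (4 * Real.pi * (n + 1 / 2) * (c / E₀ ^ n * (2 / E₀) ^ (-1 / 2 : ℝ)))) := by
  convert (tendsto_mul_zetaOne_div_integral_betaKernel hE₀ hφ'_cont hφ').add
    (tendsto_mul_zetaTwo_div_integral_betaKernel hE₀ hφ_cont hφ) using 2 with V
  · rw [mul_add, add_div]
  · ring

theorem tendsto_surfaceMoment_mul_zeta_div_sq (hE₀ : 0 < E₀) (hc : c ≠ 0)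
    (hφ_cont : ContinuousOn φ (Ioo 0 1)) (hφ'_cont : ContinuousOn (deriv φ) (Ioo 0 1))
    (hφ : Tendsto (fun x ↦ φ x / x ^ n) (𝓝[>] 0) (𝓝 c))
    (hφ' : Tendsto (fun x ↦ x * deriv φ x / x ^ n) (𝓝[>] 0) (𝓝 (n * c))) :
    Tendsto (fun V ↦ surfaceMoment φ E₀ (1 / 2) V * (zetaOne φ E₀ V + zetaTwo φ E₀ V) /
      surfaceMoment φ E₀ (-1 / 2) V ^ 2) (𝓝[<] E₀) (𝓝 ((2 * n + 1) / (2 * n + 3))) := by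
  have hnum := tendsto_surfaceMoment_div_integral_betaKernel hE₀ (κ := 1 / 2) (by norm_num)
    hφ_cont hφ
  have hden := tendsto_surfaceMoment_div_integral_betaKernel hE₀ (κ := -1 / 2) (by norm_num)
    hφ_cont hφ
  have hzeta := tendsto_mul_zeta_div_integral_betaKernel hE₀ hφ_cont hφ'_cont hφ hφ'
  have hroot : (2 / E₀) ^ (1 / 2 : ℝ) = 2 / E₀ * (2 / E₀) ^ (-1 / 2 : ℝ) := by
    rw [← Real.rpow_one_add' (by positivity) (by norm_num)]
    norm_num
  have hden_ne : 4 * Real.pi / E₀ * (c / E₀ ^ n * (2 / E₀) ^ (-1 / 2 : ℝ)) ≠ 0 := by positivity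
  have hlim := ((hnum.mul hzeta).div (hden.pow 2) (pow_ne_zero 2 hden_ne)).mul_const
    (1 / (2 * n + 3 : ℝ))
  convert hlim.congr' ?_ using 2
  · rw [hroot]
    field_simp
  · filter_upwards [self_mem_nhdsWithin] with V (hV : V < E₀)
    have hEV : E₀ - V ≠ 0 := (sub_pos.2 hV).ne'
    have hI := (integral_betaKernel_pos (s := -1 / 2) n hV (by norm_num)).ne'
    rw [Pi.div_apply, integral_betaKernel_one_half n hV]
    generalize (∫ E in V..E₀, betaKernel E₀ n (-1 / 2) V E) = I at hI ⊢
    field_simp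

end Moments

theorem abs_two_mul_add_one_div_two_mul_add_three_lt {n : ℕ} (hn : n ≤ 3) :
    |((2 * n + 1) / (2 * n + 3) : ℝ)| < 4 / 5 := by
  rw [abs_of_nonneg (by positivity), div_lt_div_iff₀ (by positivity) (by norm_num)]
  have hn' : (n : ℝ) ≤ 3 := by exact_mod_cast hn
  linarith

theorem stmt_8_general {E₀ : ℝ} (hE₀ : 0 < E₀) {n : ℕ} {φ : ℝ → ℝ}
    (hanalytic : AnalyticOn ℝ φ (Icc 0 1))
    (hder : ∀ k < n, iteratedDerivWithin k φ (Icc (0 : ℝ) 1) 0 = 0)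
    (hdern : iteratedDerivWithin n φ (Icc (0 : ℝ) 1) 0 ≠ 0) :
    Tendsto (fun V ↦ surfaceMoment φ E₀ (1 / 2) V * (zetaOne φ E₀ V + zetaTwo φ E₀ V) /
      surfaceMoment φ E₀ (-1 / 2) V ^ 2) (𝓝[<] E₀) (𝓝 ((2 * n + 1) / (2 * n + 3))) := by
  have hmem : (0 : ℝ) ∈ Icc (0 : ℝ) 1 := ⟨le_rfl, zero_le_one⟩
  obtain ⟨h, hh, hh₀, hφh⟩ := exists_eventuallyEq_pow_smul_of_iteratedDerivWithin
    (uniqueDiffOn_Icc one_pos) hmem (hanalytic 0 hmem) hder hdern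
  have hφ_eq : ∀ᶠ x in 𝓝[>] 0, φ x = x ^ n * h x := by
    simpa using hφh.filter_mono (nhdsWithin_le_of_mem (Icc_mem_nhdsGT one_pos))
  have hφ_analytic : AnalyticOnNhd ℝ φ (Ioo 0 1) :=
    isOpen_Ioo.analyticOn_iff_analyticOnNhd.1 (hanalytic.mono Ioo_subset_Icc_self)
  exact tendsto_surfaceMoment_mul_zeta_div_sq hE₀ hh₀ hφ_analytic.continuousOn
    hφ_analytic.deriv.continuousOn (tendsto_div_pow_of_eventuallyEq hh.continuousAt hφ_eq)
    (tendsto_mul_deriv_div_pow_of_eventuallyEq hh hφ_eq)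

/-- Lemma 4.7: for `n ≤ 3`, near the surface `V = E₀` one has
`|ξ_{1/2}(V) ζ(V) / ξ_{-1/2}(V)²| < 4/5`, where `ζ = ζ₁ + ζ₂` is the nontrivial
part of the derivative of `ξ_{-1/2}`. -/
theorem stmt_8 (E₀ : ℝ) (hE₀ : 0 < E₀) (n : ℕ) (hn : n ≤ 3) (φ : ℝ → ℝ)
    (hnn : ∀ x, 0 ≤ φ x) (hzero : ∀ x < (0 : ℝ), φ x = 0)
    (hanalytic : AnalyticOn ℝ φ (Set.Icc 0 1))
    (hder : ∀ k < n, iteratedDerivWithin k φ (Set.Icc (0 : ℝ) 1) 0 = 0)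
    (hdern : 0 < iteratedDerivWithin n φ (Set.Icc (0 : ℝ) 1) 0)
    (ξ : ℝ → ℝ → ℝ)
    (hξ : ∀ κ V, ξ κ V =
      (4 * Real.pi / V) * ∫ E in V..E₀, φ (1 - E / E₀) * (E ^ 2 / V ^ 2 - 1) ^ κ)
    (ζ₁ ζ₂ ζ : ℝ → ℝ)
    (hζ₁ : ∀ V, ζ₁ V = 4 * Real.pi * ∫ E in V..E₀,
      deriv φ (1 - E / E₀) * ((E₀ - E) / (E₀ * (E₀ - V))) * (E ^ 2 / V ^ 2 - 1) ^ (-(1:ℝ)/2))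
    (hζ₂ : ∀ V, ζ₂ V = -(4 * Real.pi / (E₀ - V)) * ∫ E in V..E₀,
      φ (1 - E / E₀) * (E ^ 2 / V ^ 2 - 1) ^ (-(1:ℝ)/2) * (E * E₀ / ((E + V) * V) - 1))
    (hζ : ∀ V, ζ V = ζ₁ V + ζ₂ V) :
    ∃ Vs ∈ Set.Ioo (0 : ℝ) E₀, ∀ V ∈ Set.Ioo Vs E₀,
      |ξ (1/2) V * ζ V / (ξ (-1/2) V) ^ 2| < 4 / 5 := by
  simp only [hξ, hζ, hζ₁, hζ₂]
  exact exists_mem_Ioo_forall_abs_lt_of_tendsto_nhdsLT (stmt_8_general hE₀ hanalytic hder hdern.ne')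
    hE₀ (abs_two_mul_add_one_div_two_mul_add_three_lt hn)
end

section
/- Fix E₀ > 0, let n ∈ ℕ with n ≤ 3, and let φ : ℝ → ℝ be nonnegative, vanish on (−∞, 0), be real-analytic on [0,1], and satisfy φ^{(k)}(0) = 0 for 0 ≤ k ≤ n−1 and φ^{(n)}(0) > 0. Define ξ_κ(V) = (4π/V) ∫_V^{E₀} φ(1 − E/E₀)(E²/V² − 1)^κ dE for κ ∈ {3/2, 1/2, −1/2}, ρ(V) = ξ_{3/2}(V) + ξ_{1/2}(V), p(V) = (1/3) ξ_{3/2}(V), κ(V) = ((ρ(V) + p(V))/(ρ(V) + 3p(V))) · (ρ′(V)/p′(V)), and I(V) = (1/5)κ(V)² + 2κ(V) + (ρ(V) + p(V)) · (κ′(V)/p′(V)). Then I(V) → −∞ as V → E₀ from the left; in particular there exists V₀ ∈ (0, E₀) such that I(V) ≤ 0 for all V ∈ [V₀, E₀). -/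
open MeasureTheory Filter Topology
open scoped Interval

/-!
Work in `s = 1 - V / E₀` and write `φ x = x ^ μ * ψ x` near `0⁺` with `ψ 0 ≠ 0` (`μ = n` in the
analytic case). The substitution `E = E₀ (1 - s u)` turns `ξ_β` into `s ^ (μ + β + 1)` times a
Beta-type integral that depends smoothly on `s` up to `s = 0` and does not vanish there. With
`a = μ + 3 / 2` this gives `ρ = s ^ a * R` and `p = s ^ (a + 1) * P`, so `κ` and `I` have poles of
order one and two: `κ = s⁻¹ * K` and `I = s⁻² * B` with `K` and `B` continuous at `0` and
`B 0 = a (a / 5 - 1) (R 0 / ((a + 1) P 0)) ^ 2`. This is negative exactly when `0 < a < 5`; hence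
the bound `μ < 7 / 2`, that is `n ≤ 3`.
-/

section ParametricIntegral

lemma continuousOn_slice_of_forall_continuousAt {X Y Z : Type*} [TopologicalSpace X]
    [TopologicalSpace Y] [TopologicalSpace Z] {G : X × Y → Z} {K : Set Y} {s : X}
    (hG : ∀ u ∈ K, ContinuousAt G (s, u)) : ContinuousOn (fun u => G (s, u)) K := fun u hu =>
  ((hG u hu).comp (f := fun u => (s, u)) (by fun_prop)).continuousWithinAt

lemma exists_eventually_forall_norm_le_of_isCompact {X Y E : Type*} [TopologicalSpace X]
    [TopologicalSpace Y] [SeminormedAddGroup E] {G : X × Y → E} {K : Set Y} (hK : IsCompact K)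
    {s₀ : X} (hG : ∀ u ∈ K, ContinuousAt G (s₀, u)) :
    ∃ C, ∀ᶠ s in 𝓝 s₀, ∀ u ∈ K, ‖G (s, u)‖ ≤ C := by
  obtain ⟨C, hC⟩ := hK.exists_bound_of_continuousOn (continuousOn_slice_of_forall_continuousAt hG)
  refine ⟨C + 1, hK.eventually_forall_of_forall_eventually fun u hu => ?_⟩
  exact (hG u hu).norm.eventually_le_const ((hC u hu).trans_lt (lt_add_one C))

variable {X E : Type*} [NormedAddCommGroup X] [NormedSpace ℝ X]
  [NormedAddCommGroup E] [NormedSpace ℝ E]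

lemma eventually_forall_contDiffAt_of_isCompact {Y : Type*} [NormedAddCommGroup Y]
    [NormedSpace ℝ Y] {G : X × Y → E} {K : Set Y} (hK : IsCompact K) {m : ℕ} {s₀ : X}
    (hG : ∀ u ∈ K, ContDiffAt ℝ m G (s₀, u)) :
    ∀ᶠ s in 𝓝 s₀, ∀ u ∈ K, ContDiffAt ℝ m G (s, u) :=
  hK.eventually_forall_of_forall_eventually fun u hu => (hG u hu).eventually (by simp)

variable {w : ℝ → ℝ} {a b : ℝ}

lemma intervalIntegrable_smul_slice {X : Type*} [TopologicalSpace X]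
    (hw : IntervalIntegrable w volume a b) {G : X × ℝ → E} {s : X}
    (hG : ∀ u ∈ [[a, b]], ContinuousAt G (s, u)) :
    IntervalIntegrable (fun u => w u • G (s, u)) volume a b :=
  hw.smul_continuousOn (continuousOn_slice_of_forall_continuousAt hG)

lemma continuousAt_intervalIntegral_smul (hw : IntervalIntegrable w volume a b)
    {G : X × ℝ → E} {s₀ : X} (hG : ∀ u ∈ [[a, b]], ContDiffAt ℝ 0 G (s₀, u)) :
    ContinuousAt (fun s => ∫ u in a..b, w u • G (s, u)) s₀ := by
  obtain ⟨C, hC⟩ := exists_eventually_forall_norm_le_of_isCompact isCompact_uIcc fun u hu =>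
    (hG u hu).continuousAt
  refine intervalIntegral.continuousAt_of_dominated_interval (bound := fun u => ‖w u‖ * C)
    ?_ ?_ (hw.norm.mul_const C) ?_
  · filter_upwards [eventually_forall_contDiffAt_of_isCompact isCompact_uIcc (m := 0) hG] with s hs
    exact (intervalIntegrable_smul_slice hw fun u hu =>
      (hs u hu).continuousAt).aestronglyMeasurable_restrict_uIoc
  · filter_upwards [hC] with s hs
    refine .of_forall fun u hu => ?_
    rw [norm_smul]
    gcongr
    exact hs u (Set.uIoc_subset_uIcc hu)
  · refine .of_forall fun u hu => .const_smul ?_ _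
    exact (hG u (Set.uIoc_subset_uIcc hu)).continuousAt.comp (f := fun s => (s, u)) (by fun_prop)

lemma hasDerivAt_intervalIntegral_smul (hw : IntervalIntegrable w volume a b)
    {G : ℝ × ℝ → E} {s₀ : ℝ} (hG : ∀ u ∈ [[a, b]], ContDiffAt ℝ 1 G (s₀, u)) :
    HasDerivAt (fun s => ∫ u in a..b, w u • G (s, u))
      (∫ u in a..b, w u • fderiv ℝ G (s₀, u) (1, 0)) s₀ := by
  have hG' : ∀ u ∈ [[a, b]], ContinuousAt (fun q => fderiv ℝ G q (1, 0)) (s₀, u) := fun u hu =>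
    ((hG u hu).continuousAt_fderiv one_ne_zero).clm_apply continuousAt_const
  obtain ⟨C, hC⟩ := exists_eventually_forall_norm_le_of_isCompact isCompact_uIcc hG'
  have hnear := eventually_forall_contDiffAt_of_isCompact isCompact_uIcc (m := 1)
    (by simpa using hG)
  refine (intervalIntegral.hasDerivAt_integral_of_dominated_loc_of_deriv_le
    (F := fun s u => w u • G (s, u)) (F' := fun s u => w u • fderiv ℝ G (s, u) (1, 0))
    (bound := fun u => ‖w u‖ * C) (hC.and hnear) ?_ ?_ ?_ ?_ (hw.norm.mul_const C) ?_).2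
  · filter_upwards [hnear] with s hs
    exact (intervalIntegrable_smul_slice hw fun u hu =>
      (hs u hu).continuousAt).aestronglyMeasurable_restrict_uIoc
  · exact intervalIntegrable_smul_slice hw fun u hu => (hG u hu).continuousAt
  · exact (intervalIntegrable_smul_slice hw hG').aestronglyMeasurable_restrict_uIoc
  · refine .of_forall fun u hu s hs => ?_
    rw [norm_smul]
    gcongr
    exact hs.1 u (Set.uIoc_subset_uIcc hu)
  · refine .of_forall fun u hu s hs => .const_smul _ ?_
    have hfderiv := ((hs.2 u (Set.uIoc_subset_uIcc hu)).differentiableAt (by simp)).hasFDerivAt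
    exact hfderiv.comp_hasDerivAt s ((hasDerivAt_id s).prodMk (hasDerivAt_const s u))

theorem contDiffAt_intervalIntegral_smul (hw : IntervalIntegrable w volume a b) {m : ℕ}
    {G : ℝ × ℝ → E} {s₀ : ℝ} (hG : ∀ u ∈ [[a, b]], ContDiffAt ℝ m G (s₀, u)) :
    ContDiffAt ℝ m (fun s => ∫ u in a..b, w u • G (s, u)) s₀ := by
  induction m generalizing G with
  | zero =>
    have hnear := eventually_forall_contDiffAt_of_isCompact isCompact_uIcc hG
    refine contDiffAt_zero.2 ⟨_, hnear, fun s hs => ?_⟩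
    exact (continuousAt_intervalIntegral_smul hw hs).continuousWithinAt
  | succ m ih =>
    have hnear := eventually_forall_contDiffAt_of_isCompact isCompact_uIcc hG
    refine contDiffAt_succ_iff_hasFDerivAt.2
      ⟨fun s => .toSpanSingleton ℝ (∫ u in a..b, w u • fderiv ℝ G (s, u) (1, 0)),
        ⟨_, hnear, fun s hs => ?_⟩, ?_⟩
    · refine (hasDerivAt_intervalIntegral_smul hw fun u hu => (hs u hu).of_le ?_).hasFDerivAt
      simp
    · have hderiv : ContDiffAt ℝ m (fun s => ∫ u in a..b, w u • fderiv ℝ G (s, u) (1, 0)) s₀ :=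
        ih (G := fun q => fderiv ℝ G q (1, 0)) fun u hu =>
          ((hG u hu).fderiv_right (by simp)).clm_apply contDiffAt_const
      exact (ContinuousLinearMap.toSpanSingletonCLE (𝕜 := ℝ)).contDiff.contDiffAt.comp s₀ hderiv

end ParametricIntegral

/-- If `f s = s ^ a * g s` for `s > 0`, then `deriv f s = s ^ (a - 1) * derivFactor a g s`. -/
noncomputable def derivFactor (a : ℝ) (g : ℝ → ℝ) (s : ℝ) : ℝ :=
  a * g s + s * deriv g s

lemma derivFactor_apply_zero (a : ℝ) (g : ℝ → ℝ) : derivFactor a g 0 = a * g 0 := by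
  simp [derivFactor]

lemma contDiffAt_derivFactor (a : ℝ) {g : ℝ → ℝ} {m : ℕ} {s : ℝ}
    (hg : ContDiffAt ℝ (m + 1) g s) : ContDiffAt ℝ m (derivFactor a g) s := by
  have hg' : ContDiffAt ℝ m (deriv g) s := hg.derivWithin le_rfl
  exact (contDiffAt_const.mul (hg.of_le (by simp))).add (contDiffAt_id.mul hg')

lemma hasDerivAt_rpow_mul (a : ℝ) {g : ℝ → ℝ} {s : ℝ} (hs : 0 < s)
    (hg : DifferentiableAt ℝ g s) :
    HasDerivAt (fun s => s ^ a * g s) (s ^ (a - 1) * derivFactor a g s) s := by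
  refine ((Real.hasDerivAt_rpow_const (.inl hs.ne')).mul hg.hasDerivAt).congr_deriv ?_
  rw [derivFactor, Real.rpow_sub_one hs.ne']
  field_simp

lemma deriv_eventuallyEq_rpow_mul {a : ℝ} {f g : ℝ → ℝ} (hg : ContDiffAt ℝ 1 g 0)
    (hf : f =ᶠ[𝓝[>] 0] fun s => s ^ a * g s) :
    deriv f =ᶠ[𝓝[>] 0] fun s => s ^ (a - 1) * derivFactor a g s := by
  have hg' : ∀ᶠ s in 𝓝[>] 0, ContDiffAt ℝ 1 g s := nhdsWithin_le_nhds (hg.eventually (by simp))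
  filter_upwards [eventually_eventually_nhdsWithin.2 hf, hg', self_mem_nhdsWithin]
    with s hfs hgs hs
  rw [IsOpen.nhdsWithin_eq isOpen_Ioi hs] at hfs
  rw [EventuallyEq.deriv_eq hfs]
  exact (hasDerivAt_rpow_mul a hs (hgs.differentiableAt one_ne_zero)).deriv

section BeigSimon

/-- The Beig–Simon quantity `κ = ((ρ + p) / (ρ + 3p)) dρ/dp`, with `dρ/dp` computed along the
parameter on which `ρ` and `p` depend. -/
noncomputable def beigSimonKappa (ρ p : ℝ → ℝ) (V : ℝ) : ℝ :=
  (ρ V + p V) / (ρ V + 3 * p V) * (deriv ρ V / deriv p V)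

/-- The Beig–Simon quantity `I = κ² / 5 + 2κ + (ρ + p) dκ/dp`, whose sign decides whether the
Beig–Simon uniqueness theorem applies, with `dκ/dp` computed along the parameter on which `ρ` and
`p` depend. -/
noncomputable def beigSimonI (ρ p : ℝ → ℝ) (V : ℝ) : ℝ :=
  (1 / 5) * beigSimonKappa ρ p V ^ 2 + 2 * beigSimonKappa ρ p V
    + (ρ V + p V) * (deriv (beigSimonKappa ρ p) V / deriv p V)

lemma deriv_comp_const_sub_mul (f : ℝ → ℝ) (b c s : ℝ) :
    deriv (fun s => f (b - c * s)) s = -c * deriv f (b - c * s) := by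
  rw [deriv_comp_mul_left c (fun y => f (b - y)) s, deriv_comp_const_sub, smul_eq_mul]
  ring

lemma deriv_div_deriv_comp_const_sub_mul (f g : ℝ → ℝ) (b : ℝ) {c : ℝ} (hc : c ≠ 0) (s : ℝ) :
    deriv (fun s => f (b - c * s)) s / deriv (fun s => g (b - c * s)) s
      = deriv f (b - c * s) / deriv g (b - c * s) := by
  rw [deriv_comp_const_sub_mul, deriv_comp_const_sub_mul, mul_div_mul_left _ _ (neg_ne_zero.2 hc)]

lemma beigSimonKappa_comp_const_sub_mul (ρ p : ℝ → ℝ) (b : ℝ) {c : ℝ} (hc : c ≠ 0) :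
    beigSimonKappa (fun s => ρ (b - c * s)) (fun s => p (b - c * s))
      = fun s => beigSimonKappa ρ p (b - c * s) := by
  funext s
  rw [beigSimonKappa, deriv_div_deriv_comp_const_sub_mul ρ p b hc, beigSimonKappa]

lemma beigSimonI_comp_const_sub_mul (ρ p : ℝ → ℝ) (b : ℝ) {c : ℝ} (hc : c ≠ 0) :
    beigSimonI (fun s => ρ (b - c * s)) (fun s => p (b - c * s))
      = fun s => beigSimonI ρ p (b - c * s) := by
  funext s
  rw [beigSimonI, beigSimonKappa_comp_const_sub_mul ρ p b hc,
    deriv_div_deriv_comp_const_sub_mul (beigSimonKappa ρ p) p b hc, beigSimonI]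

/-- If `ρ s = s ^ a * R s` and `p s = s ^ (a + 1) * P s` for small `s > 0`, then
`κ = s⁻¹ * kappaFactor a R P s`. -/
noncomputable def kappaFactor (a : ℝ) (R P : ℝ → ℝ) (s : ℝ) : ℝ :=
  (R s + s * P s) / (R s + 3 * (s * P s)) * (derivFactor a R s / derivFactor (a + 1) P s)

/-- If `ρ s = s ^ a * R s` and `p s = s ^ (a + 1) * P s` for small `s > 0`, then
`I = s ^ (-2) * iFactor a R P s`. -/
noncomputable def iFactor (a : ℝ) (R P : ℝ → ℝ) (s : ℝ) : ℝ :=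
  (1 / 5) * kappaFactor a R P s ^ 2 + 2 * s * kappaFactor a R P s
    + (R s + s * P s) * (derivFactor (-1) (kappaFactor a R P) s / derivFactor (a + 1) P s)

variable {a : ℝ} {R P ρ p : ℝ → ℝ}

lemma beigSimonKappa_eventuallyEq (hR : ContDiffAt ℝ 1 R 0) (hP : ContDiffAt ℝ 1 P 0)
    (hρ : ρ =ᶠ[𝓝[>] 0] fun s => s ^ a * R s) (hp : p =ᶠ[𝓝[>] 0] fun s => s ^ (a + 1) * P s) :
    beigSimonKappa ρ p =ᶠ[𝓝[>] 0] fun s => s ^ (-1 : ℝ) * kappaFactor a R P s := by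
  filter_upwards [hρ, hp, deriv_eventuallyEq_rpow_mul hR hρ, deriv_eventuallyEq_rpow_mul hP hp,
    self_mem_nhdsWithin] with s hρs hps hρ's hp's (hs : 0 < s)
  have hsa : s ^ a ≠ 0 := (Real.rpow_pos_of_pos hs a).ne'
  have hfrac : (ρ s + p s) / (ρ s + 3 * p s) = (R s + s * P s) / (R s + 3 * (s * P s)) := by
    rw [hρs, hps, Real.rpow_add_one hs.ne', ← mul_div_mul_left (R s + s * P s) _ hsa]
    ring_nf
  rw [beigSimonKappa, kappaFactor, hfrac, hρ's, hp's, Real.rpow_sub_one hs.ne',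
    add_sub_cancel_right, Real.rpow_neg_one]
  field_simp

lemma contDiffAt_kappaFactor {m : ℕ} (ha : a + 1 ≠ 0) (hR : ContDiffAt ℝ (m + 1) R 0)
    (hP : ContDiffAt ℝ (m + 1) P 0) (hR0 : R 0 ≠ 0) (hP0 : P 0 ≠ 0) :
    ContDiffAt ℝ m (kappaFactor a R P) 0 := by
  have hRm : ContDiffAt ℝ m R 0 := hR.of_le (by simp)
  have hPm : ContDiffAt ℝ m P 0 := hP.of_le (by simp)
  have hsP : ContDiffAt ℝ m (fun s => s * P s) 0 := contDiffAt_id.mul hPm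
  refine ((hRm.add hsP).div (hRm.add (contDiffAt_const.mul hsP)) (by simpa using hR0)).mul
    ((contDiffAt_derivFactor a hR).div (contDiffAt_derivFactor (a + 1) hP) ?_)
  rw [derivFactor_apply_zero]
  exact mul_ne_zero ha hP0

lemma kappaFactor_apply_zero (hR0 : R 0 ≠ 0) :
    kappaFactor a R P 0 = a * R 0 / ((a + 1) * P 0) := by
  simp [kappaFactor, derivFactor_apply_zero, hR0]

lemma beigSimonI_eventuallyEq (ha : a + 1 ≠ 0) (hR : ContDiffAt ℝ 2 R 0) (hP : ContDiffAt ℝ 2 P 0)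
    (hR0 : R 0 ≠ 0) (hP0 : P 0 ≠ 0)
    (hρ : ρ =ᶠ[𝓝[>] 0] fun s => s ^ a * R s) (hp : p =ᶠ[𝓝[>] 0] fun s => s ^ (a + 1) * P s) :
    beigSimonI ρ p =ᶠ[𝓝[>] 0] fun s => s ^ (-2 : ℝ) * iFactor a R P s := by
  have hP1 : ContDiffAt ℝ 1 P 0 := hP.of_le one_le_two
  have hκ := beigSimonKappa_eventuallyEq (hR.of_le one_le_two) hP1 hρ hp
  have hκ' := deriv_eventuallyEq_rpow_mul
    (contDiffAt_kappaFactor (m := 1) ha hR hP hR0 hP0) hκ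
  filter_upwards [hρ, hp, deriv_eventuallyEq_rpow_mul hP1 hp, hκ, hκ', self_mem_nhdsWithin]
    with s hρs hps hp's hκs hκ's (hs : 0 < s)
  have hsa : s ^ a ≠ 0 := (Real.rpow_pos_of_pos hs a).ne'
  rw [beigSimonI, iFactor, hρs, hps, hp's, hκs, hκ's, add_sub_cancel_right,
    Real.rpow_add_one hs.ne', Real.rpow_sub_one hs.ne', Real.rpow_neg_one,
    show (-2 : ℝ) = -1 - 1 by norm_num, Real.rpow_sub_one hs.ne', Real.rpow_neg_one]
  field_simp

lemma continuousAt_iFactor (ha : a + 1 ≠ 0) (hR : ContDiffAt ℝ 2 R 0) (hP : ContDiffAt ℝ 2 P 0)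
    (hR0 : R 0 ≠ 0) (hP0 : P 0 ≠ 0) : ContinuousAt (iFactor a R P) 0 := by
  have hK := contDiffAt_kappaFactor (m := 1) ha hR hP hR0 hP0
  have hDK := (contDiffAt_derivFactor (m := 0) (-1) hK).continuousAt
  have hDP := (contDiffAt_derivFactor (m := 1) (a + 1) hP).continuousAt
  have hsum := hR.continuousAt.add (continuousAt_id.mul hP.continuousAt)
  refine ((hK.continuousAt.pow 2).const_mul _ |>.add
    ((continuousAt_id.const_mul 2).mul hK.continuousAt)).add (hsum.mul (hDK.div hDP ?_))
  rw [derivFactor_apply_zero]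
  exact mul_ne_zero ha hP0

lemma iFactor_apply_zero (ha : a + 1 ≠ 0) (hR0 : R 0 ≠ 0) (hP0 : P 0 ≠ 0) :
    iFactor a R P 0 = a * (a / 5 - 1) * (R 0 / ((a + 1) * P 0)) ^ 2 := by
  simp only [iFactor, derivFactor_apply_zero, kappaFactor_apply_zero hR0]
  field_simp
  ring

theorem tendsto_beigSimonI_atBot (ha : 0 < a) (ha5 : a < 5)
    (hR : ContDiffAt ℝ 2 R 0) (hP : ContDiffAt ℝ 2 P 0) (hR0 : R 0 ≠ 0) (hP0 : P 0 ≠ 0)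
    (hρ : ρ =ᶠ[𝓝[>] 0] fun s => s ^ a * R s) (hp : p =ᶠ[𝓝[>] 0] fun s => s ^ (a + 1) * P s) :
    Tendsto (beigSimonI ρ p) (𝓝[>] 0) atBot := by
  have ha1 : a + 1 ≠ 0 := by positivity
  have hneg : iFactor a R P 0 < 0 := by
    rw [iFactor_apply_zero ha1 hR0 hP0]
    exact mul_neg_of_neg_of_pos (mul_neg_of_pos_of_neg ha (by linarith)) (by positivity)
  have hlim : Tendsto (iFactor a R P) (𝓝[>] 0) (𝓝 (iFactor a R P 0)) :=
    (continuousAt_iFactor ha1 hR hP hR0 hP0).tendsto.mono_left nhdsWithin_le_nhds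
  have hpow : Tendsto (fun s : ℝ => s ^ (-2 : ℝ)) (𝓝[>] 0) atTop :=
    tendsto_rpow_neg_nhdsGT_zero (by norm_num)
  exact (hpow.atTop_mul_neg hneg hlim).congr' (beigSimonI_eventuallyEq ha1 hR hP hR0 hP0 hρ hp).symm

end BeigSimon

lemma exists_analyticAt_eventuallyEq_pow_smul {𝕜 E : Type*} [NontriviallyNormedField 𝕜]
    [CharZero 𝕜] [NormedAddCommGroup E] [NormedSpace 𝕜 E] [CompleteSpace E]
    {f : 𝕜 → E} {s : Set 𝕜} {x : 𝕜} {n : ℕ} (hs : UniqueDiffOn 𝕜 s) (hx : x ∈ s)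
    (hf : AnalyticWithinAt 𝕜 f s x) (hzero : ∀ k < n, iteratedDerivWithin k f s x = 0)
    (hne : iteratedDerivWithin n f s x ≠ 0) :
    ∃ g : 𝕜 → E, AnalyticAt 𝕜 g x ∧ g x ≠ 0 ∧ f =ᶠ[𝓝[s] x] fun y => (y - x) ^ n • g y := by
  obtain ⟨F, -, hfF, hF⟩ := hf.exists_analyticAt
  rw [Set.insert_eq_of_mem hx] at hfF
  have hderiv (k : ℕ) : iteratedDerivWithin k f s x = iteratedDeriv k F x := by
    rw [iteratedDerivWithin_congr hfF hx]
    exact iteratedDerivWithin_eq_iteratedDeriv hs hF.contDiffAt hx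
  have horder : analyticOrderAt F x = n := by
    rw [analyticOrderAt_eq_nat_iff_iteratedDeriv_eq_zero hF]
    exact ⟨fun k hk => hderiv k ▸ hzero k hk, hderiv n ▸ hne⟩
  obtain ⟨g, hg, hgx, hFg⟩ := hF.analyticOrderAt_eq_natCast.1 horder
  refine ⟨g, hg, hgx, ?_⟩
  filter_upwards [nhdsWithin_le_nhds hFg, self_mem_nhdsWithin] with y hy hys
  rw [hfF hys, hy]

lemma exists_analyticAt_eventuallyEq_rpow_mul {φ : ℝ → ℝ} {n : ℕ} {b : ℝ} (hb : 0 < b)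
    (hφ : AnalyticWithinAt ℝ φ (Set.Icc 0 b) 0)
    (hzero : ∀ k < n, iteratedDerivWithin k φ (Set.Icc 0 b) 0 = 0)
    (hne : iteratedDerivWithin n φ (Set.Icc 0 b) 0 ≠ 0) :
    ∃ ψ : ℝ → ℝ, AnalyticAt ℝ ψ 0 ∧ ψ 0 ≠ 0 ∧ φ =ᶠ[𝓝[>] 0] fun x => x ^ (n : ℝ) * ψ x := by
  obtain ⟨ψ, hψ, hψ0, hφψ⟩ := exists_analyticAt_eventuallyEq_pow_smul (uniqueDiffOn_Icc hb)
    (Set.left_mem_Icc.2 hb.le) hφ hzero hne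
  have hright := hφψ.filter_mono (nhdsWithin_le_of_mem (Icc_mem_nhdsGT hb))
  exact ⟨ψ, hψ, hψ0, by simpa using hright⟩

lemma tendsto_one_sub_div_nhdsLT {E₀ : ℝ} (hE₀ : 0 < E₀) :
    Tendsto (fun V => 1 - V / E₀) (𝓝[<] E₀) (𝓝[>] 0) := by
  refine tendsto_nhdsWithin_iff.2 ⟨?_, ?_⟩
  · refine Tendsto.mono_left ?_ nhdsWithin_le_nhds
    exact Continuous.tendsto' (by fun_prop) E₀ 0 (by rw [div_self hE₀.ne', sub_self])
  · filter_upwards [self_mem_nhdsWithin] with V hV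
    exact sub_pos.2 ((div_lt_one hE₀).2 hV)

lemma exists_forall_mem_Ico_of_eventually_nhdsLT {α : Type*} [TopologicalSpace α] [LinearOrder α]
    [OrderTopology α] [DenselyOrdered α] {q : α → Prop} {a b : α} (hab : a < b)
    (hq : ∀ᶠ x in 𝓝[<] b, q x) : ∃ c ∈ Set.Ioo a b, ∀ x ∈ Set.Ico c b, q x := by
  obtain ⟨l, hl, hsub⟩ := (mem_nhdsLT_iff_exists_mem_Ico_Ioo_subset hab).1 hq
  obtain ⟨c, hlc, hcb⟩ := exists_between hl.2
  exact ⟨c, ⟨hl.1.trans_lt hlc, hcb⟩, fun x hx => hsub ⟨hlc.trans_le hx.1, hx.2⟩⟩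

section VlasovMoment

lemma intervalIntegrable_rpow_mul_one_sub_rpow {μ β : ℝ} (hμ : -1 < μ) (hβ : -1 < β) :
    IntervalIntegrable (fun u : ℝ => u ^ μ * (1 - u) ^ β) volume 0 1 := by
  have hconv := Complex.betaIntegral_convergent (u := (μ + 1 : ℝ)) (v := (β + 1 : ℝ))
    (by simpa using by linarith) (by simpa using by linarith)
  refine hconv.norm.congr_uIoo fun u hu => ?_
  rw [Set.uIoo_of_le zero_le_one] at hu
  have hcpow {x : ℝ} (hx : 0 < x) (c : ℝ) : ‖(x : ℂ) ^ ((c + 1 : ℝ) - 1 : ℂ)‖ = x ^ c := by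
    rw [Complex.norm_cpow_eq_rpow_re_of_pos hx]
    simp
  dsimp only
  rw [norm_mul, hcpow hu.1, ← Complex.ofReal_one, ← Complex.ofReal_sub, Complex.ofReal_one,
    hcpow (sub_pos.2 hu.2)]

lemma integral_rpow_mul_one_sub_rpow_pos {μ β : ℝ} (hμ : -1 < μ) (hβ : -1 < β) :
    0 < ∫ u in (0 : ℝ)..1, u ^ μ * (1 - u) ^ β :=
  intervalIntegral.intervalIntegral_pos_of_pos_on
    (intervalIntegrable_rpow_mul_one_sub_rpow hμ hβ)
    (fun _ hu => mul_pos (Real.rpow_pos_of_pos hu.1 μ) (Real.rpow_pos_of_pos (sub_pos.2 hu.2) β))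
    one_pos

/-- The moment `ξ_β(V)` of the particle distribution with ansatz function `φ` and cut-off energy
`E₀`, from which the matter quantities are built. -/
noncomputable def vlasovMoment (E₀ : ℝ) (φ : ℝ → ℝ) (β V : ℝ) : ℝ :=
  (4 * Real.pi / V) * ∫ E in V..E₀, φ (1 - E / E₀) * (E ^ 2 / V ^ 2 - 1) ^ β

/-- The factor left in `ξ_β(V)`, for `φ x = x ^ μ * ψ x` near `0`, after extracting the leading
power `s ^ (μ + β + 1)` of `s = 1 - V / E₀`. It is what the substitution `E = E₀ (1 - s u)`
produces, and does not depend on `E₀`. -/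
noncomputable def momentFactor (μ β : ℝ) (ψ : ℝ → ℝ) (s : ℝ) : ℝ :=
  4 * Real.pi * (1 - s) ^ (-(2 * β + 1))
    * ∫ u in (0 : ℝ)..1, (u ^ μ * (1 - u) ^ β) * (ψ (s * u) * (2 - s * (1 + u)) ^ β)

variable {μ β : ℝ} {φ ψ : ℝ → ℝ}

lemma contDiffAt_momentFactor {m : ℕ} (hμ : -1 < μ) (hβ : -1 < β) (hψ : ContDiffAt ℝ m ψ 0) :
    ContDiffAt ℝ m (momentFactor μ β ψ) 0 := by
  have hpow : ContDiffAt ℝ m (fun s : ℝ => (1 - s) ^ (-(2 * β + 1))) 0 :=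
    .rpow_const_of_ne (by fun_prop) (by norm_num)
  refine (contDiffAt_const.mul hpow).mul (contDiffAt_intervalIntegral_smul
    (G := fun q => ψ (q.1 * q.2) * (2 - q.1 * (1 + q.2)) ^ β)
    (intervalIntegrable_rpow_mul_one_sub_rpow hμ hβ) fun u _ => ?_)
  have hψu : ContDiffAt ℝ m (fun q : ℝ × ℝ => ψ (q.1 * q.2)) (0, u) :=
    ContDiffAt.comp (g := ψ) _ (by simpa using hψ) (by fun_prop)
  exact hψu.mul (.rpow_const_of_ne (by fun_prop) (by norm_num))

lemma momentFactor_apply_zero_ne_zero (hμ : -1 < μ) (hβ : -1 < β) (hψ0 : ψ 0 ≠ 0) :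
    momentFactor μ β ψ 0 ≠ 0 := by
  have hbeta := (integral_rpow_mul_one_sub_rpow_pos hμ hβ).ne'
  simp only [momentFactor, zero_mul, sub_zero, Real.one_rpow, mul_one,
    intervalIntegral.integral_mul_const]
  have : (2 : ℝ) ^ β ≠ 0 := by positivity
  have := Real.pi_ne_zero
  positivity

lemma sq_div_sq_sub_one_rpow_s14 {E₀ s u : ℝ} (hE₀ : E₀ ≠ 0) (hs : s ∈ Set.Ioo 0 1) (hu : u < 1) :
    ((E₀ - E₀ * s * u) ^ 2 / (E₀ - E₀ * s) ^ 2 - 1) ^ β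
      = s ^ β * (1 - s) ^ (-(2 * β)) * ((1 - u) ^ β * (2 - s * (1 + u)) ^ β) := by
  obtain ⟨hs0, hs1⟩ := hs
  have h1s : 0 < 1 - s := sub_pos.2 hs1
  have h1u : 0 < 1 - u := sub_pos.2 hu
  have hpos : 0 < 2 - s * (1 + u) := by linarith [mul_pos hs0 h1u]
  have hbase : (E₀ - E₀ * s * u) ^ 2 / (E₀ - E₀ * s) ^ 2 - 1
      = s * (1 - s) ^ (-2 : ℝ) * ((1 - u) * (2 - s * (1 + u))) := by
    rw [← mul_one_sub, Real.rpow_neg h1s.le, Real.rpow_two]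
    field_simp
    ring
  rw [hbase, Real.mul_rpow (by positivity) (by positivity), Real.mul_rpow hs0.le (by positivity),
    Real.mul_rpow h1u.le hpos.le, ← Real.rpow_mul h1s.le, neg_mul]

lemma vlasovMoment_eq_rpow_mul {E₀ s : ℝ} (hE₀ : E₀ ≠ 0) (hs : s ∈ Set.Ioo 0 1)
    (hφ : ∀ x ∈ Set.Ioo 0 s, φ x = x ^ μ * ψ x) :
    vlasovMoment E₀ φ β (E₀ - E₀ * s) = s ^ (μ + β + 1) * momentFactor μ β ψ s := by
  have hs0 : 0 < s := hs.1
  have h1s : 0 < 1 - s := sub_pos.2 hs.2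
  have hintegrand : Set.EqOn
      (fun u => φ (1 - (E₀ - E₀ * s * u) / E₀)
        * ((E₀ - E₀ * s * u) ^ 2 / (E₀ - E₀ * s) ^ 2 - 1) ^ β)
      (fun u => (s ^ μ * s ^ β * (1 - s) ^ (-(2 * β)))
        * ((u ^ μ * (1 - u) ^ β) * (ψ (s * u) * (2 - s * (1 + u)) ^ β))) (Set.Ioo 0 1) := by
    intro u hu
    have harg : 1 - (E₀ - E₀ * s * u) / E₀ = s * u := by
      field_simp
      ring
    dsimp only
    rw [harg, hφ (s * u) ⟨mul_pos hs0 hu.1, mul_lt_of_lt_one_right hs0 hu.2⟩,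
      sq_div_sq_sub_one_rpow_s14 hE₀ hs hu.2, Real.mul_rpow hs0.le hu.1.le]
    ring
  have hsubst := intervalIntegral.mul_integral_comp_sub_mul (a := (0 : ℝ)) (b := 1)
    (f := fun E => φ (1 - E / E₀) * (E ^ 2 / (E₀ - E₀ * s) ^ 2 - 1) ^ β) (E₀ * s) E₀
  rw [intervalIntegral.integral_congr_Ioo_of_le zero_le_one hintegrand,
    intervalIntegral.integral_const_mul, mul_one, mul_zero, sub_zero] at hsubst
  rw [vlasovMoment, ← hsubst, momentFactor, Real.rpow_add_one hs0.ne', Real.rpow_add hs0,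
    neg_add, Real.rpow_add h1s, Real.rpow_neg_one, ← mul_one_sub]
  field_simp

lemma vlasovMoment_eventuallyEq {E₀ : ℝ} (hE₀ : E₀ ≠ 0) (β : ℝ)
    (hφ : φ =ᶠ[𝓝[>] 0] fun x => x ^ μ * ψ x) :
    (fun s => vlasovMoment E₀ φ β (E₀ - E₀ * s))
      =ᶠ[𝓝[>] 0] fun s => s ^ (μ + β + 1) * momentFactor μ β ψ s := by
  obtain ⟨δ, hδ, hφδ⟩ := mem_nhdsGT_iff_exists_Ioo_subset.1 hφ
  filter_upwards [Ioo_mem_nhdsGT (lt_min hδ one_pos)] with s ⟨hs0, hs⟩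
  rw [lt_min_iff] at hs
  exact vlasovMoment_eq_rpow_mul hE₀ ⟨hs0, hs.2⟩ fun x hx => hφδ ⟨hx.1, hx.2.trans hs.1⟩

/-- The energy density `ρ(V)` of the fluid associated with the ansatz function `φ`. -/
noncomputable def energyDensity (E₀ : ℝ) (φ : ℝ → ℝ) (V : ℝ) : ℝ :=
  vlasovMoment E₀ φ (3 / 2) V + vlasovMoment E₀ φ (1 / 2) V

/-- The pressure `p(V)` of the fluid associated with the ansatz function `φ`. -/
noncomputable def pressure (E₀ : ℝ) (φ : ℝ → ℝ) (V : ℝ) : ℝ :=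
  (1 / 3) * vlasovMoment E₀ φ (3 / 2) V

lemma pressure_eventuallyEq {E₀ : ℝ} (hE₀ : E₀ ≠ 0) (hφ : φ =ᶠ[𝓝[>] 0] fun x => x ^ μ * ψ x) :
    (fun s => pressure E₀ φ (E₀ - E₀ * s))
      =ᶠ[𝓝[>] 0] fun s => s ^ (μ + 3 / 2 + 1) * ((1 / 3) * momentFactor μ (3 / 2) ψ s) := by
  filter_upwards [vlasovMoment_eventuallyEq hE₀ (3 / 2) hφ] with s hs
  rw [pressure, hs]
  ring

lemma energyDensity_eventuallyEq {E₀ : ℝ} (hE₀ : E₀ ≠ 0)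
    (hφ : φ =ᶠ[𝓝[>] 0] fun x => x ^ μ * ψ x) :
    (fun s => energyDensity E₀ φ (E₀ - E₀ * s)) =ᶠ[𝓝[>] 0] fun s =>
      s ^ (μ + 3 / 2) * (momentFactor μ (1 / 2) ψ s + s * momentFactor μ (3 / 2) ψ s) := by
  filter_upwards [vlasovMoment_eventuallyEq hE₀ (3 / 2) hφ,
    vlasovMoment_eventuallyEq hE₀ (1 / 2) hφ, self_mem_nhdsWithin] with s hs₃ hs₁ (hs : 0 < s)
  rw [energyDensity, hs₃, hs₁, show μ + 1 / 2 + 1 = μ + 3 / 2 by ring, Real.rpow_add_one hs.ne']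
  ring

theorem tendsto_beigSimonI_vlasov {E₀ : ℝ} (hE₀ : 0 < E₀) (hμ : -1 < μ) (hμ' : μ < 7 / 2)
    (hψ : ContDiffAt ℝ 2 ψ 0) (hψ0 : ψ 0 ≠ 0) (hφ : φ =ᶠ[𝓝[>] 0] fun x => x ^ μ * ψ x) :
    Tendsto (beigSimonI (energyDensity E₀ φ) (pressure E₀ φ)) (𝓝[<] E₀) atBot := by
  have hξ₁ : ContDiffAt ℝ 2 (momentFactor μ (1 / 2) ψ) 0 :=
    contDiffAt_momentFactor hμ (by norm_num) hψ
  have hξ₃ : ContDiffAt ℝ 2 (momentFactor μ (3 / 2) ψ) 0 :=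
    contDiffAt_momentFactor hμ (by norm_num) hψ
  have hξ₁0 : momentFactor μ (1 / 2) ψ 0 ≠ 0 := momentFactor_apply_zero_ne_zero hμ (by norm_num) hψ0
  have hξ₃0 : momentFactor μ (3 / 2) ψ 0 ≠ 0 := momentFactor_apply_zero_ne_zero hμ (by norm_num) hψ0
  have hlim := tendsto_beigSimonI_atBot (by linarith) (by linarith)
    (hξ₁.add (contDiffAt_id.mul hξ₃)) (contDiffAt_const.mul hξ₃) (by simpa using hξ₁0)
    (by simpa using hξ₃0) (energyDensity_eventuallyEq hE₀.ne' hφ) (pressure_eventuallyEq hE₀.ne' hφ)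
  rw [beigSimonI_comp_const_sub_mul _ _ _ hE₀.ne'] at hlim
  refine (hlim.comp (tendsto_one_sub_div_nhdsLT hE₀)).congr fun V => ?_
  have hV : E₀ - E₀ * (1 - V / E₀) = V := by
    field_simp
    ring
  rw [Function.comp_apply, hV]

theorem stmt_14_general {E₀ : ℝ} (hE₀ : 0 < E₀) (hμ : -1 < μ) (hμ' : μ < 7 / 2)
    (hψ : ContDiffAt ℝ 2 ψ 0) (hψ0 : ψ 0 ≠ 0) (hφ : φ =ᶠ[𝓝[>] 0] fun x => x ^ μ * ψ x) :
    Tendsto (beigSimonI (energyDensity E₀ φ) (pressure E₀ φ)) (𝓝[<] E₀) atBot ∧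
      ∃ V₀ ∈ Set.Ioo 0 E₀, ∀ V ∈ Set.Ico V₀ E₀,
        beigSimonI (energyDensity E₀ φ) (pressure E₀ φ) V ≤ 0 := by
  have hlim := tendsto_beigSimonI_vlasov hE₀ hμ hμ' hψ hψ0 hφ
  exact ⟨hlim, exists_forall_mem_Ico_of_eventually_nhdsLT hE₀ (hlim.eventually_le_atBot 0)⟩

end VlasovMoment

/-- Analytic core of Theorem 4.1: for an ansatz function φ satisfying (4.8) with
`n ≤ 3`, the Beig–Simon function `I` (parametrized by the lapse `V`) tends to `-∞`
as `V → E₀⁻`; in particular `I ≤ 0` on some interval `[V₀, E₀)`. -/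
theorem stmt_14 (E₀ : ℝ) (hE₀ : 0 < E₀) (n : ℕ) (hn : n ≤ 3) (φ : ℝ → ℝ)
    (hnn : ∀ x, 0 ≤ φ x) (hzero : ∀ x < (0 : ℝ), φ x = 0)
    (hanalytic : AnalyticOn ℝ φ (Set.Icc 0 1))
    (hder : ∀ k < n, iteratedDerivWithin k φ (Set.Icc (0 : ℝ) 1) 0 = 0)
    (hdern : 0 < iteratedDerivWithin n φ (Set.Icc (0 : ℝ) 1) 0)
    (ξ : ℝ → ℝ → ℝ)
    (hξ : ∀ κ V, ξ κ V =
      (4 * Real.pi / V) * ∫ E in V..E₀, φ (1 - E / E₀) * (E ^ 2 / V ^ 2 - 1) ^ κ)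
    (ρ p κ I : ℝ → ℝ)
    (hρ : ∀ V, ρ V = ξ (3/2) V + ξ (1/2) V)
    (hp : ∀ V, p V = (1/3) * ξ (3/2) V)
    (hκ : ∀ V, κ V = ((ρ V + p V) / (ρ V + 3 * p V)) * (deriv ρ V / deriv p V))
    (hI : ∀ V, I V = (1/5) * (κ V) ^ 2 + 2 * κ V + (ρ V + p V) * (deriv κ V / deriv p V)) :
    Tendsto I (nhdsWithin E₀ (Set.Iio E₀)) atBot ∧
      ∃ V₀ ∈ Set.Ioo (0 : ℝ) E₀, ∀ V ∈ Set.Ico V₀ E₀, I V ≤ 0 := by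
  obtain ⟨rfl, rfl, rfl, rfl, rfl⟩ : ξ = _ ∧ ρ = _ ∧ p = _ ∧ κ = _ ∧ I = _ :=
    ⟨funext₂ hξ, funext hρ, funext hp, funext hκ, funext hI⟩
  obtain ⟨ψ, hψ, hψ0, hφ⟩ := exists_analyticAt_eventuallyEq_rpow_mul one_pos
    (hanalytic 0 (Set.left_mem_Icc.2 zero_le_one)) hder hdern.ne'
  have hn' : (n : ℝ) ≤ 3 := mod_cast hn
  exact stmt_14_general hE₀ (by linarith [n.cast_nonneg (α := ℝ)]) (by linarith)
    hψ.contDiffAt hψ0 hφ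
end
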